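/- Let I be a compact interval in ℝ and f : I → I a continuous map. Suppose there is a point of I which is not asymptotically periodic of period 1 or 2, and the set {(x, y) ∈ I × I : liminf_{n→∞} |fⁿ(x) − fⁿ(y)| = 0} is dense in I × I. Then f has periodic points of all even periods and f² is doubly turbulent on I. -/

import Mathlib

open Filter Set Function

/-- `J` is a compact subinterval of `I`. -/
def IsCompactSubinterval (J I : Set ℝ) : Prop :=
  J ⊆ I ∧ ∃ p q : ℝ, p ≤ q ∧ J = Set.Icc p q

/-- `g` is turbulent on the compact interval `J`: there are compact subintervals
`J₀`, `J₁` of `J` with at most one point in common with `g(J₀) ∩ g(J₁) ⊇ J₀ ∪ J₁`. -/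
def TurbulentOn (g : ℝ → ℝ) (J : Set ℝ) : Prop :=
  ∃ J₀ J₁ : Set ℝ, IsCompactSubinterval J₀ J ∧ IsCompactSubinterval J₁ J ∧
    (J₀ ∩ J₁).Subsingleton ∧ J₀ ∪ J₁ ⊆ g '' J₀ ∩ g '' J₁

/-- `g` is doubly turbulent on `I`: it is turbulent on two compact subintervals
of `I` having at most one point in common. -/
def DoublyTurbulentOn (g : ℝ → ℝ) (I : Set ℝ) : Prop :=
  ∃ K L : Set ℝ, IsCompactSubinterval K I ∧ IsCompactSubinterval L I ∧
    (K ∩ L).Subsingleton ∧ TurbulentOn g K ∧ TurbulentOn g L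

/-- `y` is a periodic point of `f` of (least) period `m`. -/
def PeriodicPtOfPeriod (f : ℝ → ℝ) (m : ℕ) (y : ℝ) : Prop :=
  f^[m] y = y ∧ ∀ j : ℕ, 0 < j → j < m → f^[j] y ≠ y

/-- `x` is a chain recurrent point of `f : I → I`. -/
def ChainRecurrentPt (f : ℝ → ℝ) (I : Set ℝ) (x : ℝ) : Prop :=
  x ∈ I ∧ ∀ ε : ℝ, 0 < ε → ∃ n : ℕ, 1 ≤ n ∧ ∃ xs : ℕ → ℝ,
    (∀ i ≤ n, xs i ∈ I) ∧ xs 0 = x ∧ xs n = x ∧ ∀ i < n, |f (xs i) - xs (i + 1)| < ε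

/-- `z` belongs to the ω-limit set of `c` under `f`, i.e. `z` is a limit point of
the sequence `(f^[n] c)`. -/
def OmegaLimitPt (f : ℝ → ℝ) (c z : ℝ) : Prop :=
  ∃ φ : ℕ → ℕ, StrictMono φ ∧ Filter.Tendsto (fun i => f^[φ i] c) Filter.atTop (nhds z)

/-- The sets `K` and `L` lie on opposite sides of the point `z`. -/
def OppositeSides (K L : Set ℝ) (z : ℝ) : Prop :=
  ((∀ x ∈ K, x < z) ∧ (∀ y ∈ L, z < y)) ∨ ((∀ x ∈ K, z < x) ∧ (∀ y ∈ L, y < z))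

open Topology

/-!
Suppose that the even times of some orbit of `f` do not converge. If, on an interval to the left of
a fixed point `z` of `f` which `f` maps to the right of `z`, the second iterate `f²` has a valley or
a peak, then it has a horseshoe there. The horseshoe yields all even periods, and carrying it over
by `f` gives another one to the right of `z`. A spiral of `f` produces such a valley.

If there is no such configuration on either side of any fixed point, the orbit oscillates about a
fixed point `z` and eventually alternates between its two sides. The even times then oscillate about
a fixed point `ζ` of `f²`, and the absence of valleys and peaks confines `f²` to an interval
`[p, q]` around `ζ`, lying to the left of `z` and mapped by `f` to the right of `z`. Orbits started
near `ζ` and near `f ζ` stay on opposite sides of the gap between `q` and `z`, so `(ζ, f ζ)` is not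
a limit of pairs whose orbits come arbitrarily close.
-/

theorem exists_step_of_not {P : ℕ → Prop} {i j : ℕ} (hij : i ≤ j) (hi : P i) (hj : ¬P j) :
    ∃ k, i ≤ k ∧ k < j ∧ (∀ l, i ≤ l → l ≤ k → P l) ∧ ¬P (k + 1) := by
  by_contra! hno
  have hall : ∀ n, i ≤ n → n ≤ j → ∀ l, i ≤ l → l ≤ n → P l := by
    intro n hin
    induction n, hin using Nat.le_induction with
    | base => exact fun _ l hil hli ↦ le_antisymm hil hli ▸ hi
    | succ n hin ih =>
      intro hnj l hil hln
      rcases hln.lt_or_eq with hlt | rfl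
      · exact ih (by lia) l hil (by lia)
      · exact hno n hin (by lia) (ih (by lia))
  exact hj (hall j hij le_rfl j hij le_rfl)

section FirstPoint

variable {α β : Type*} [LinearOrder α] [TopologicalSpace α] [OrderClosedTopology α]
  [CompactIccSpace α] [LinearOrder β] [TopologicalSpace β] [OrderClosedTopology β]
  {f g : α → β} {a b : α}

theorem exists_first_le (hf : Continuous f) (hg : Continuous g) (hab : a ≤ b)
    (hb : f b ≤ g b) : ∃ t ∈ Icc a b, f t ≤ g t ∧ ∀ x ∈ Ico a t, g x < f x := by
  obtain ⟨t, ⟨htab, ht⟩, hmin⟩ :=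
    (isCompact_Icc.inter_right (isClosed_le hf hg)).exists_isLeast ⟨b, right_mem_Icc.2 hab, hb⟩
  exact ⟨t, htab, ht, fun x hx ↦ lt_of_not_ge fun hle ↦
    hx.2.not_ge (hmin ⟨⟨hx.1, hx.2.le.trans htab.2⟩, hle⟩)⟩

theorem exists_last_le (hf : Continuous f) (hg : Continuous g) (hab : a ≤ b)
    (ha : f a ≤ g a) : ∃ t ∈ Icc a b, f t ≤ g t ∧ ∀ x ∈ Ioc t b, g x < f x := by
  obtain ⟨t, ⟨htab, ht⟩, hmax⟩ :=
    (isCompact_Icc.inter_right (isClosed_le hf hg)).exists_isGreatest ⟨a, left_mem_Icc.2 hab, ha⟩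
  exact ⟨t, htab, ht, fun x hx ↦ lt_of_not_ge fun hle ↦
    hx.1.not_ge (hmax ⟨⟨htab.1.trans hx.1.le, hx.2⟩, hle⟩)⟩

end FirstPoint

/-- `y` is an orbit of `h`. Encoding orbits as sequences makes tails of an orbit of `h`, and the
even times of an orbit of `f` under `f^[2]`, orbits again. -/
def IsOrbit {α : Type*} (h : α → α) (y : ℕ → α) : Prop :=
  ∀ n, y (n + 1) = h (y n)

theorem IsOrbit.eq_of_isFixedPt {α : Type*} {h : α → α} {y : ℕ → α} (hy : IsOrbit h y) {n m : ℕ}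
    (hn : IsFixedPt h (y n)) (hnm : n ≤ m) : y m = y n := by
  induction m, hnm using Nat.le_induction with
  | base => rfl
  | succ m _ ih => rw [hy m, ih, hn]

section Fold

variable {α : Type*} [LinearOrder α] {h : α → α} {J : Set α} {y : ℕ → α}

/-- A valley of `h` in `J`: a point `r` sent to the left of `s` between two points `s` and `t` sent
to the right of `t`. Both sides of a valley cover the whole of `[s, t]`. -/
def HasValley (h : α → α) (J : Set α) : Prop :=
  ∃ s ∈ J, ∃ r ∈ J, ∃ t ∈ J, s < r ∧ r < t ∧ t ≤ h s ∧ h r ≤ s ∧ t ≤ h t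

/-- The mirror image of a valley; the order of the clauses makes it definitionally a valley for the
dual order. -/
def HasPeak (h : α → α) (J : Set α) : Prop :=
  ∃ s ∈ J, ∃ r ∈ J, ∃ t ∈ J, r < s ∧ t < r ∧ h s ≤ t ∧ s ≤ h r ∧ h t ≤ t

theorem IsOrbit.hasValley_of_upcrossing (hy : IsOrbit h y) (hyJ : ∀ n, y n ∈ J) {t : α}
    (htJ : t ∈ J) (ht : t ≤ h t) {i j : ℕ} (hij : i ≤ j) (hi : y i < t) (hj : t ≤ y j)
    (hstep : ∀ k, y i ≤ y k → y k < t → y (k + 1) < t) : HasValley h J := by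
  obtain ⟨k, hik, -, hlt, hcross⟩ := exists_step_of_not (P := fun n ↦ y n < t) hij hi hj.not_gt
  have hki : y k < y i := lt_of_not_ge fun hle ↦ hcross (hstep k hle (hlt k hik le_rfl))
  obtain ⟨l, hil, hlk, hgt, hle⟩ :=
    exists_step_of_not (P := fun n ↦ y k < y n) hik hki (lt_irrefl _)
  exact ⟨y k, hyJ k, y l, hyJ l, t, htJ, hgt l hil le_rfl, hlt l hil hlk.le,
    hy k ▸ not_lt.1 hcross, hy l ▸ not_lt.1 hle, ht⟩

theorem lt_of_isMinOn_of_not_hasValley (hJ : J.OrdConnected) (hV : ¬HasValley h J)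
    {z₁ z₂ r₀ r t : α} (hz : z₁ ≤ z₂) (hzr₀ : z₂ < r₀) (hr₀t : r₀ < t) (hr₀ : h r₀ < z₁)
    (ht : t ≤ h t) (htJ : t ∈ J) (hr : r ∈ Icc z₁ t) (hmin : IsMinOn h (Icc z₁ t) r) {x : α}
    (hxJ : x ∈ J) (hrx : h r ≤ x) (hxz : x ≤ z₂) : h x < t := by
  by_contra! htx
  have hz₁r₀ : z₁ < r₀ := hz.trans_lt hzr₀
  have hsub : Icc x t ⊆ J := hJ.out hxJ htJ
  rcases lt_or_ge x z₁ with hxz₁ | hzx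
  · have hrt : r < t := hr.2.lt_of_ne fun heq ↦
      ((hmin ⟨hz₁r₀.le, hr₀t.le⟩).trans_lt (hr₀.trans (hz₁r₀.trans hr₀t))).not_ge (heq ▸ ht)
    exact hV ⟨x, hxJ, r, hsub ⟨(hxz₁.trans_le hr.1).le, hr.2⟩, t, htJ, hxz₁.trans_le hr.1, hrt, htx,
      hrx, ht⟩
  · exact hV ⟨x, hxJ, r₀, hsub ⟨hxz.trans hzr₀.le, hr₀t.le⟩, t, htJ, hxz.trans_lt hzr₀, hr₀t, htx,
      hr₀.le.trans hzx, ht⟩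

section

variable [TopologicalSpace α] [CompactIccSpace α] [OrderClosedTopology α]

theorem IsOrbit.le_of_descends_of_ascends (hy : IsOrbit h y) (hh : Continuous h)
    (hJ : J.OrdConnected) (hyJ : ∀ n, y n ∈ J) (hV : ¬HasValley h J) {i j : ℕ} (hij : i ≤ j)
    (hi : y (i + 1) < y i) (hj : y j < y (j + 1)) : y j ≤ y i := by
  by_contra! hlt
  obtain ⟨t, htij, ht, hbelow⟩ :=
    exists_first_le continuous_id hh hlt.le (hy j ▸ hj.le : y j ≤ h (y j))
  have hit : y i < t := htij.1.lt_of_ne fun heq ↦ (hy i ▸ hi).not_ge (heq ▸ ht)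
  exact hV <| hy.hasValley_of_upcrossing hyJ (hJ.out (hyJ i) (hyJ j) htij) ht hij hit htij.2
    fun k hik hkt ↦ hy k ▸ (hbelow (y k) ⟨hik, hkt⟩).trans hkt

theorem IsOrbit.le_of_ascends_of_descends (hy : IsOrbit h y) (hh : Continuous h)
    (hJ : J.OrdConnected) (hyJ : ∀ n, y n ∈ J) (hP : ¬HasPeak h J) {i j : ℕ} (hij : i ≤ j)
    (hi : y i < y (i + 1)) (hj : y (j + 1) < y j) : y i ≤ y j :=
  IsOrbit.le_of_descends_of_ascends (α := αᵒᵈ) hy hh hJ.dual hyJ hP hij hi hj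

end

end Fold

/-! ### Orbits oscillating about a fixed point -/

/-- A spiral of `f`: left of a fixed point `z`, a point `u` is thrown across `z` at least as far
as a point `v`, and `v` is thrown back at least as far as a point `x` to the left of `u` which does
not cross `z`. The mirror image is `HasSpiral` for the dual order. -/
def HasSpiral {α : Type*} [LinearOrder α] (f : α → α) : Prop :=
  ∃ x u z v, x < u ∧ u < z ∧ z < v ∧ IsFixedPt f z ∧ f x ≤ z ∧ v ≤ f u ∧ f v ≤ x

/-- The orbit `y` moves in the direction of the fixed point `z` at every step, possibly past it,
visits both sides of `z` infinitely often, and yet does not converge to `z`. -/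
structure OscillatesAbout {α : Type*} [LinearOrder α] [TopologicalSpace α] (h : α → α) (y : ℕ → α)
    (z : α) : Prop where
  orbit : IsOrbit h y
  fixed : IsFixedPt h z
  ascends : ∀ n, y n < z → y n < y (n + 1)
  descends : ∀ n, z < y n → y (n + 1) < y n
  frequently_lt : ∃ᶠ n in atTop, y n < z
  frequently_gt : ∃ᶠ n in atTop, z < y n
  not_tendsto : ¬Tendsto y atTop (𝓝 z)

namespace OscillatesAbout

section Order

variable {α : Type*} [LinearOrder α] [TopologicalSpace α] {h : α → α} {y : ℕ → α} {z : α}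

theorem dual (ho : OscillatesAbout h y z) : OscillatesAbout (α := αᵒᵈ) h y z where
  orbit := ho.orbit
  fixed := ho.fixed
  ascends := ho.descends
  descends := ho.ascends
  frequently_lt := ho.frequently_gt
  frequently_gt := ho.frequently_lt
  not_tendsto := ho.not_tendsto

theorem ne (ho : OscillatesAbout h y z) (n : ℕ) : y n ≠ z := by
  rintro rfl
  obtain ⟨m, hnm, hm⟩ := frequently_atTop.1 ho.frequently_lt n
  exact hm.ne (ho.orbit.eq_of_isFixedPt ho.fixed hnm)

theorem lt_of_lt_succ (ho : OscillatesAbout h y z) {n : ℕ} (hn : y n < y (n + 1)) : y n < z :=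
  (ho.ne n).lt_or_gt.resolve_right fun hgt ↦ (ho.descends n hgt).not_gt hn

theorem gt_of_succ_lt (ho : OscillatesAbout h y z) {n : ℕ} (hn : y (n + 1) < y n) : z < y n :=
  ho.dual.lt_of_lt_succ hn

theorem exists_jump (ho : OscillatesAbout h y z) {n k : ℕ} (hnk : n ≤ k) (hn : y n < z)
    (hk : z < y k) : ∃ j, n ≤ j ∧ j < k ∧ y j < z ∧ y k ≤ y (j + 1) := by
  obtain ⟨j, hnj, hjk, hlt, hle⟩ :=
    exists_step_of_not (P := fun i ↦ y i < y k) hnk (hn.trans hk) (lt_irrefl _)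
  have hjump : y k ≤ y (j + 1) := not_lt.1 hle
  exact ⟨j, hnj, hjk, ho.lt_of_lt_succ ((hlt j hnj le_rfl).trans_le hjump), hjump⟩

theorem lt_of_not_hasSpiral (ho : OscillatesAbout h y z) (hS : ¬HasSpiral h) {x : α} (hx : h x ≤ z)
    {n m : ℕ} (hxn : x < y n) (hnz : y n < z) (hnm : n ≤ m) : x < y m := by
  by_contra hmx
  obtain ⟨k, hnk, -, hgt, hle⟩ := exists_step_of_not (P := fun i ↦ x < y i) hnm hxn hmx
  have hkx : y (k + 1) ≤ x := not_lt.1 hle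
  have hzk : z < y k := ho.gt_of_succ_lt (hkx.trans_lt (hgt k hnk le_rfl))
  obtain ⟨j, hnj, hjk, hjz, hjump⟩ := ho.exists_jump hnk hnz hzk
  exact hS ⟨x, y j, z, y k, hgt j hnj hjk.le, hjz, hzk, ho.fixed, hx, ho.orbit j ▸ hjump,
    ho.orbit k ▸ hkx⟩

theorem lt_of_not_hasValley (ho : OscillatesAbout h y z) {J : Set α} (hyJ : ∀ n, y n ∈ J)
    (hV : ¬HasValley h J) {t : α} (htJ : t ∈ J) (ht : t ≤ h t) {n m : ℕ} (hzn : z < y n)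
    (hnt : y n < t) (hnm : n ≤ m) : y m < t := by
  by_contra! hmt
  exact hV <| ho.orbit.hasValley_of_upcrossing hyJ htJ ht hnm hnt hmt
    fun k hnk hkt ↦ (ho.descends k (hzn.trans_le hnk)).trans hkt

theorem frequently_upward (ho : OscillatesAbout h y z) :
    ∃ᶠ n in atTop, y n < z ∧ z < y (n + 1) := by
  refine frequently_atTop.2 fun N ↦ ?_
  obtain ⟨i, hNi, hi⟩ := frequently_atTop.1 ho.frequently_lt N
  obtain ⟨k, hik, hk⟩ := frequently_atTop.1 ho.frequently_gt i
  obtain ⟨j, hij, -, hj, hjump⟩ := ho.exists_jump hik hi hk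
  exact ⟨j, hNi.trans hij, hj, hk.trans_le hjump⟩

theorem frequently_downward (ho : OscillatesAbout h y z) :
    ∃ᶠ n in atTop, z < y n ∧ y (n + 1) < z :=
  ho.dual.frequently_upward

theorem exists_frequently_le [OrderTopology α] (ho : OscillatesAbout h y z) (hh : Continuous h) :
    ∃ c < z, ∃ᶠ n in atTop, y n ≤ c := by
  by_contra! hlow
  refine ho.not_tendsto (tendsto_order.2 ⟨hlow, fun d hd ↦ ?_⟩)
  obtain ⟨i, hi⟩ := ho.frequently_lt.exists
  obtain ⟨c, hc, hcd⟩ := exists_Ioc_subset_of_mem_nhds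
    (hh.continuousAt.eventually_lt continuousAt_const (ho.fixed.trans_lt hd)) ⟨y i, hi⟩
  obtain ⟨N, hN⟩ := eventually_atTop.1 (hlow c hc)
  obtain ⟨n, hNn, hn⟩ := frequently_atTop.1 ho.frequently_lt N
  refine eventually_atTop.2 ⟨n, fun m hm ↦ ?_⟩
  induction m, hm using Nat.le_induction with
  | base => exact hn.trans hd
  | succ m hnm ih =>
    rcases (ho.ne m).lt_or_gt with hlt | hgt
    · exact ho.orbit m ▸ hcd ⟨hN m (hNn.trans hnm), hlt.le⟩
    · exact (ho.descends m hgt).trans ih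

theorem mem_of_ordConnected (ho : OscillatesAbout h y z) {J : Set α} (hJ : J.OrdConnected)
    (hyJ : ∀ n, y n ∈ J) : z ∈ J := by
  obtain ⟨i, hi⟩ := ho.frequently_lt.exists
  obtain ⟨j, hj⟩ := ho.frequently_gt.exists
  exact hJ.out (hyJ i) (hyJ j) ⟨hi.le, hj.le⟩

theorem eventually_gt_of_stays_below (ho : OscillatesAbout h y z) (hS : ¬HasSpiral h)
    {c : α} {n : ℕ} (hcn : c ≤ y n) (hn : y n < z) (hn' : y (n + 1) < z) :
    ∀ᶠ m in atTop, c < y m :=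
  eventually_atTop.2 ⟨n + 1, fun _ hm ↦ hcn.trans_lt <|
    ho.lt_of_not_hasSpiral hS (ho.orbit n ▸ hn'.le) (ho.ascends n hn) hn' hm⟩

theorem hasSpiral_of_frequently_lt [OrderTopology α] (ho : OscillatesAbout h y z)
    (hh : Continuous h) {l : α} (hlz : l < z) (hl : h l ≤ z)
    (hlow : ∀ c < l, ∀ᶠ n in atTop, c < y n) (hfreq : ∃ᶠ n in atTop, y n < l) : HasSpiral h := by
  obtain ⟨i, hi⟩ := hfreq.exists
  obtain ⟨p, hp⟩ := ho.frequently_gt.exists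
  obtain ⟨d, hzd, hd⟩ := exists_Ico_subset_of_mem_nhds
    (continuousAt_const.eventually_lt hh.continuousAt (hlz.trans_eq ho.fixed.symm)) ⟨y p, hp⟩
  obtain ⟨c, hcl, hc⟩ := exists_Ioc_subset_of_mem_nhds
    (hh.continuousAt.eventually_lt continuousAt_const (hl.trans_lt hzd)) ⟨y i, hi⟩
  obtain ⟨N, hN⟩ := eventually_atTop.1 (hlow c hcl)
  obtain ⟨n, hNn, hn⟩ := frequently_atTop.1 hfreq N
  obtain ⟨m, hnm, hm⟩ := frequently_atTop.1 ho.frequently_gt n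
  obtain ⟨q, hmq, hq⟩ := frequently_atTop.1 hfreq m
  obtain ⟨k, hmk, -, hgt, hle⟩ :=
    exists_step_of_not (P := fun i ↦ l < y i) hmq (hlz.trans hm) hq.not_gt
  have hkl : y (k + 1) ≤ l := not_lt.1 hle
  have hzk : z < y k := ho.gt_of_succ_lt (hkl.trans_lt (hgt k hmk le_rfl))
  obtain ⟨j, hnj, -, hjz, hjump⟩ := ho.exists_jump (hnm.trans hmk) (hn.trans hlz) hzk
  rw [ho.orbit] at hkl hjump
  rcases lt_or_ge l (y j) with hlj | hjl
  · exact ⟨l, y j, z, y k, hlj, hjz, hzk, ho.fixed, hl, hjump, hkl⟩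
  · exact absurd (hd ⟨hzk.le, hjump.trans_lt (hc ⟨hN j (hNn.trans hnj), hjl⟩)⟩) hkl.not_gt

end Order

section Complete

variable {α : Type*} [ConditionallyCompleteLinearOrder α] [TopologicalSpace α] [OrderTopology α]
  {h : α → α} {y : ℕ → α} {z : α}

/-- If the orbit stayed below `z` infinitely often, let `l` be the supremum of the points where it
does; a later descent to the left of `l` and the jump over `z` preceding it form a spiral. -/
theorem eventually_upward (ho : OscillatesAbout h y z) (hh : Continuous h) (hS : ¬HasSpiral h) :
    ∀ᶠ n in atTop, y n < z → z < y (n + 1) := by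
  by_contra hev
  have hfreq : ∃ᶠ n in atTop, y n < z ∧ y (n + 1) < z := (not_eventually.1 hev).mono fun n hn ↦
    ⟨(Classical.not_imp.1 hn).1, (ho.ne _).lt_or_gt.resolve_right (Classical.not_imp.1 hn).2⟩
  let S : Set α := y '' {n | y n < z ∧ y (n + 1) < z}
  have hne : S.Nonempty := hfreq.exists.elim fun n hn ↦ ⟨y n, n, hn, rfl⟩
  have hSz : ∀ x ∈ S, x ≤ z := fun _ ⟨_, hn, hx⟩ ↦ hx ▸ hn.1.le
  have hle : ∀ n, y n < z ∧ y (n + 1) < z → y n ≤ sSup S := fun n hn ↦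
    le_csSup ⟨z, hSz⟩ ⟨n, hn, rfl⟩
  have hlow : ∀ c < sSup S, ∀ᶠ m in atTop, c < y m := fun c hc ↦ by
    obtain ⟨_, ⟨n, hn, rfl⟩, hcn⟩ := exists_lt_of_lt_csSup hne hc
    exact ho.eventually_gt_of_stays_below hS hcn.le hn.1 hn.2
  have hmap : h (sSup S) ≤ z := by
    have hsub : S ⊆ {x | h x ≤ z} := fun _ ⟨n, hn, hx⟩ ↦ hx ▸ (ho.orbit n ▸ hn.2).le
    exact closure_minimal hsub (isClosed_le hh continuous_const) (csSup_mem_closure hne ⟨z, hSz⟩)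
  have hltz : sSup S < z := by
    obtain ⟨c, hcz, hc⟩ := ho.exists_frequently_le hh
    refine (csSup_le hne hSz).lt_of_ne fun heq ↦ hc ?_
    filter_upwards [hlow c (heq ▸ hcz)] with n hn using hn.not_ge
  refine hS (ho.hasSpiral_of_frequently_lt hh hltz hmap hlow (hfreq.mono fun n hn ↦ ?_))
  refine (hle n hn).lt_of_ne fun heq ↦ hfreq ?_
  filter_upwards [ho.eventually_gt_of_stays_below hS heq.ge hn.1 hn.2] with m hm hm'
    using (hle m hm').not_gt hm

end Complete

end OscillatesAbout

section Bounded

variable {α : Type*} [ConditionallyCompleteLinearOrder α] [TopologicalSpace α] [OrderTopology α]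
  {h : α → α} {J : Set α} {y : ℕ → α}

theorem frequently_succ_lt_of_not_tendsto (hb : BddAbove (range y))
    (hconv : ¬∃ l, Tendsto y atTop (𝓝 l)) : ∃ᶠ n in atTop, y (n + 1) < y n := by
  by_contra hev
  simp only [not_frequently, not_lt, eventually_atTop] at hev
  obtain ⟨N, hN⟩ := hev
  have hmono : Monotone fun n ↦ y (n + N) := monotone_nat_of_le_succ fun n ↦ by
    simpa only [add_right_comm] using hN (n + N) (Nat.le_add_left N n)
  exact hconv ⟨_, (tendsto_add_atTop_iff_nat N).1 <|
    tendsto_atTop_ciSup hmono (hb.mono (range_comp_subset_range (· + N) y))⟩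

variable [DenselyOrdered α]

theorem exists_isFixedPt_separating (hh : Continuous h) {A D : Set α} (hA : A.Nonempty)
    (hD : D.Nonempty) (hAD : ∀ x ∈ A, ∀ w ∈ D, x ≤ w) (hasc : ∀ x ∈ A, x < h x)
    (hdesc : ∀ x ∈ D, h x < x) : ∃ z, IsFixedPt h z ∧ (∀ x ∈ A, x < z) ∧ ∀ x ∈ D, z < x := by
  have hAbdd : BddAbove A := hD.imp fun w hw x hx ↦ hAD x hx w hw
  have hDbdd : BddBelow D := hA.imp hAD
  have hsup : sSup A ≤ h (sSup A) := closure_minimal (fun x hx ↦ (hasc x hx).le)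
    (isClosed_le continuous_id hh) (csSup_mem_closure hA hAbdd)
  have hinf : h (sInf D) ≤ sInf D := closure_minimal (fun x hx ↦ (hdesc x hx).le)
    (isClosed_le hh continuous_id) (csInf_mem_closure hD hDbdd)
  obtain ⟨z, hz, hfix⟩ := exists_mem_Icc_isFixedPt hh.continuousOn
    (csSup_le hA fun x hx ↦ le_csInf hD (hAD x hx)) hsup hinf
  refine ⟨z, hfix, fun x hx ↦ ((le_csSup hAbdd hx).trans hz.1).lt_of_ne ?_,
    fun x hx ↦ (hz.2.trans (csInf_le hDbdd hx)).lt_of_ne ?_⟩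
  · rintro rfl
    exact (hasc x hx).ne' hfix
  · rintro rfl
    exact (hdesc z hx).ne hfix

theorem IsOrbit.exists_oscillatesAbout (hy : IsOrbit h y) (hh : Continuous h)
    (hJ : J.OrdConnected) (hyJ : ∀ n, y n ∈ J) (hV : ¬HasValley h J) (hP : ¬HasPeak h J)
    (ha : BddAbove (range y)) (hb : BddBelow (range y)) (hconv : ¬∃ l, Tendsto y atTop (𝓝 l)) :
    ∃ z, OscillatesAbout h y z := by
  have hfA : ∃ᶠ n in atTop, y n < y (n + 1) :=
    frequently_succ_lt_of_not_tendsto (α := αᵒᵈ) hb hconv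
  have hfD : ∃ᶠ n in atTop, y (n + 1) < y n := frequently_succ_lt_of_not_tendsto ha hconv
  obtain ⟨z, hfix, hA, hD⟩ := exists_isFixedPt_separating hh
    (A := y '' {n | y n < y (n + 1)}) (D := y '' {n | y (n + 1) < y n})
    (Set.Nonempty.image y hfA.exists) (Set.Nonempty.image y hfD.exists)
    (by
      rintro _ ⟨i, hi, rfl⟩ _ ⟨j, hj, rfl⟩
      rcases le_total i j with hij | hji
      · exact hy.le_of_ascends_of_descends hh hJ hyJ hP hij hi hj
      · exact hy.le_of_descends_of_ascends hh hJ hyJ hV hji hj hi)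
    (forall_mem_image.2 fun n hn ↦ hn.trans_eq (hy n))
    (forall_mem_image.2 fun n hn ↦ (hy n).symm.trans_lt hn)
  have hne : ∀ n, y n ≠ y (n + 1) := fun n hn ↦ hconv ⟨y n, tendsto_atTop_of_eventually_const
    fun m hm ↦ hy.eq_of_isFixedPt (hn.trans (hy n)).symm hm⟩
  refine ⟨z, hy, hfix, fun n hn ↦ (hne n).lt_or_gt.resolve_right fun hgt ↦ ?_,
    fun n hn ↦ (hne n).lt_or_gt.resolve_left fun hlt ↦ ?_,
    hfA.mono fun n hn ↦ hA _ ⟨n, hn, rfl⟩, hfD.mono fun n hn ↦ hD _ ⟨n, hn, rfl⟩,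
    fun hlim ↦ hconv ⟨z, hlim⟩⟩
  · exact (hD _ ⟨n, hgt, rfl⟩).not_gt hn
  · exact (hA _ ⟨n, hlt, rfl⟩).not_gt hn

end Bounded

namespace OscillatesAbout

variable {α : Type*} [ConditionallyCompleteLinearOrder α] [TopologicalSpace α] [OrderTopology α]
  {h : α → α} {J : Set α} {y : ℕ → α} {z : α}

theorem exists_fixed_right [DenselyOrdered α] (ho : OscillatesAbout h y z) (hh : Continuous h) :
    ∃ c, z ≤ c ∧ h c = c ∧ (∀ n, z < y n → c < y n) ∧
      ∀ x, c < x → x ≤ h x → ∃ n, z < y n ∧ y n < x := by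
  let S : Set α := y '' {n | z < y n}
  have hne : S.Nonempty := ho.frequently_gt.exists.elim fun n hn ↦ ⟨y n, n, hn, rfl⟩
  have hzS : ∀ x ∈ S, z ≤ x := fun _ ⟨_, hn, hx⟩ ↦ hx ▸ hn.le
  have hS : h (sInf S) ≤ sInf S := by
    have hsub : S ⊆ {x | h x ≤ x} := fun _ ⟨n, hn, hx⟩ ↦ hx ▸ (ho.orbit n ▸ ho.descends n hn).le
    exact closure_minimal hsub (isClosed_le hh continuous_id) (csInf_mem_closure hne ⟨z, hzS⟩)
  obtain ⟨c, hc, hle, hlt⟩ :=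
    exists_last_le continuous_id hh (le_csInf hne hzS) ho.fixed.ge
  have hfix : h c = c := by
    obtain ⟨w, hw, hwfix⟩ := exists_mem_Icc_isFixedPt hh.continuousOn hc.2 hle hS
    rcases hw.1.eq_or_lt with rfl | hcw
    · exact hwfix
    · exact absurd hwfix (hlt w ⟨hcw, hw.2⟩).ne
  refine ⟨c, hc.1, hfix, fun n hn ↦ ?_, fun x hcx hx ↦ ?_⟩
  · refine (hc.2.trans (csInf_le ⟨z, hzS⟩ ⟨n, hn, rfl⟩)).lt_of_ne fun heq ↦ ?_
    exact (ho.descends n hn).ne (by rw [ho.orbit, ← heq, hfix])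
  · obtain ⟨_, ⟨n, hn, rfl⟩, hnx⟩ := exists_lt_of_csInf_lt hne
      (lt_of_not_ge fun hxS ↦ (hlt x ⟨hcx, hxS⟩).not_ge hx)
    exact ⟨n, hn, hnx⟩

theorem exists_fixed_left [DenselyOrdered α] (ho : OscillatesAbout h y z) (hh : Continuous h) :
    ∃ c, c ≤ z ∧ h c = c ∧ (∀ n, y n < z → y n < c) ∧
      ∀ x, x < c → h x ≤ x → ∃ n, y n < z ∧ x < y n :=
  ho.dual.exists_fixed_right hh

/-- Otherwise the points `x > c` with `x ≤ h x` accumulate at a point `X` squeezed from the right by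
the orbit; then `h X ≤ z` and hence `X = z`, so the orbit would converge to `z`. -/
theorem exists_downward_forall_lt (ho : OscillatesAbout h y z) (hh : Continuous h)
    (hJ : J.OrdConnected) (hyJ : ∀ n, y n ∈ J) (hV : ¬HasValley h J) {c : α} (hzc : z ≤ c)
    (hc : ∀ x, c < x → x ≤ h x → ∃ n, z < y n ∧ y n < x) :
    ∃ n, z < y n ∧ y (n + 1) < z ∧ ∀ x ∈ Ioc c (y n), h x < x := by
  by_contra! hno
  let S : Set α := {x | c < x ∧ x ∈ J ∧ x ≤ h x}
  have hmem : ∀ n, z < y n ∧ y (n + 1) < z → ∃ x ∈ S, x ≤ y n := fun n hn ↦ by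
    obtain ⟨x, hx, hxh⟩ := hno n hn.1 hn.2
    exact ⟨x, ⟨hx.1, hJ.out (ho.mem_of_ordConnected hJ hyJ) (hyJ n) ⟨hzc.trans hx.1.le, hx.2⟩, hxh⟩,
      hx.2⟩
  have hbdd : BddBelow S := ⟨c, fun x hx ↦ hx.1.le⟩
  have hne : S.Nonempty := ho.frequently_downward.exists.elim fun n hn ↦
    (hmem n hn).imp fun _ ↦ And.left
  have hSle : ∀ n, z < y n ∧ y (n + 1) < z → sInf S ≤ y n := fun n hn ↦
    (hmem n hn).elim fun x hx ↦ (csInf_le hbdd hx.1).trans hx.2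
  have hev : ∀ x ∈ S, ∀ᶠ m in atTop, y m < x := fun x ⟨hcx, hxJ, hxh⟩ ↦ by
    obtain ⟨n, hzn, hnx⟩ := hc x hcx hxh
    exact eventually_atTop.2 ⟨n, fun m hm ↦ ho.lt_of_not_hasValley hyJ hV hxJ hxh hzn hnx hm⟩
  have hS : sInf S ≤ h (sInf S) := closure_minimal (fun _ hx ↦ hx.2.2)
    (isClosed_le continuous_id hh) (csInf_mem_closure hne hbdd)
  have hmap : h (sInf S) ≤ z := by
    by_contra! hlt
    obtain ⟨x, hx⟩ := hne
    obtain ⟨n, hn, hnx⟩ := (ho.frequently_downward.and_eventually (hev x hx)).exists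
    obtain ⟨d, hd, hsub⟩ := exists_Ico_subset_of_mem_nhds
      (continuousAt_const.eventually_lt hh.continuousAt hlt) ⟨x, (hSle n hn).trans_lt hnx⟩
    obtain ⟨w, hw, hwd⟩ := exists_lt_of_csInf_lt ⟨x, hx⟩ hd
    obtain ⟨m, hm, hmw⟩ := (ho.frequently_downward.and_eventually (hev w hw)).exists
    have hzm : z < h (y m) := hsub ⟨hSle m hm, hmw.trans hwd⟩
    exact hm.2.not_gt (ho.orbit m ▸ hzm)
  obtain ⟨d, hzd, hd⟩ := ho.dual.exists_frequently_le hh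
  obtain ⟨x, hx, hxd⟩ := exists_lt_of_csInf_lt hne ((hS.trans hmap).trans_lt hzd)
  exact hd ((hev x hx).mono fun m hm ↦ (hm.trans hxd).not_ge)

theorem exists_upward_forall_lt (ho : OscillatesAbout h y z) (hh : Continuous h)
    (hJ : J.OrdConnected) (hyJ : ∀ n, y n ∈ J) (hP : ¬HasPeak h J) {c : α} (hcz : c ≤ z)
    (hc : ∀ x, x < c → h x ≤ x → ∃ n, y n < z ∧ x < y n) :
    ∃ n, y n < z ∧ z < y (n + 1) ∧ ∀ x ∈ Ico (y n) c, x < h x := by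
  obtain ⟨n, hn, hn', hlt⟩ := ho.dual.exists_downward_forall_lt hh hJ.dual hyJ hP hcz hc
  exact ⟨n, hn, hn', fun x hx ↦ hlt x hx.symm⟩

end OscillatesAbout

/-! ### Intervals invariant under a map without valleys and peaks -/

section Invariant

variable {α : Type*} [ConditionallyCompleteLinearOrder α] [TopologicalSpace α] [OrderTopology α]
  {h : α → α} {J : Set α} {y : ℕ → α}

theorem exists_mapsTo_Icc_of_isMinOn (hh : Continuous h) (hJ : J.OrdConnected)
    (hV : ¬HasValley h J) {z₁ z₂ r₀ r t : α} (hz : z₁ ≤ z₂) (hzr₀ : z₂ < r₀) (hr₀t : r₀ < t)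
    (hr₀ : h r₀ < z₁) (ht : t ≤ h t) (htJ : t ∈ J) (hr : r ∈ Icc z₁ t)
    (hmin : IsMinOn h (Icc z₁ t) r) (hrJ : h r ∈ J) (hasc : ∀ x ∈ Ico (h r) z₁, x < h x)
    (hdesc : ∀ x ∈ Ioo z₂ t, h x < x) :
    ∃ β, z₂ < β ∧ β < t ∧ MapsTo h (Icc (h r) β) (Icc (h r) β) := by
  have hhr : h r < z₁ := (hmin ⟨hz.trans hzr₀.le, hr₀t.le⟩).trans_lt hr₀
  have hlt : ∀ x ∈ Icc (h r) z₂, h x < t := fun x hx ↦ lt_of_isMinOn_of_not_hasValley hJ hV hz hzr₀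
    hr₀t hr₀ ht htJ hr hmin (hJ.out hrJ htJ ⟨hx.1, hx.2.trans (hzr₀.trans hr₀t).le⟩) hx.1 hx.2
  obtain ⟨q, hq, hmax⟩ :=
    isCompact_Icc.exists_isMaxOn (nonempty_Icc.2 (hhr.le.trans hz)) hh.continuousOn
  refine ⟨max r₀ (h q), hzr₀.trans_le (le_max_left ..), max_lt hr₀t (hlt q hq),
    fun x hx ↦ ⟨?_, ?_⟩⟩
  · rcases lt_or_ge x z₁ with hxz | hxz
    · exact hx.1.trans (hasc x ⟨hx.1, hxz⟩).le
    · exact hmin ⟨hxz, hx.2.trans (max_lt hr₀t (hlt q hq)).le⟩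
  · rcases le_or_gt x z₂ with hxz | hxz
    · exact (hmax ⟨hx.1, hxz⟩).trans (le_max_right ..)
    · exact (hdesc x ⟨hxz, hx.2.trans_lt (max_lt hr₀t (hlt q hq))⟩).le.trans hx.2

theorem exists_mapsTo_Icc_of_isMaxOn (hh : Continuous h) (hJ : J.OrdConnected)
    (hP : ¬HasPeak h J) {z₁ z₂ s₀ q k : α} (hz : z₁ ≤ z₂) (hsz₀ : s₀ < z₁) (hks₀ : k < s₀)
    (hs₀ : z₂ < h s₀) (hk : h k ≤ k) (hkJ : k ∈ J) (hq : q ∈ Icc k z₂)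
    (hmax : IsMaxOn h (Icc k z₂) q) (hqJ : h q ∈ J) (hasc : ∀ x ∈ Ioo k z₁, x < h x)
    (hdesc : ∀ x ∈ Ioc z₂ (h q), h x < x) :
    ∃ β, k < β ∧ β < z₁ ∧ MapsTo h (Icc β (h q)) (Icc β (h q)) := by
  obtain ⟨β, hβz, hkβ, hmaps⟩ := exists_mapsTo_Icc_of_isMinOn (α := αᵒᵈ) hh hJ.dual hP hz hsz₀ hks₀
    hs₀ hk hkJ hq.symm (fun x hx ↦ hmax hx.symm) hqJ (fun x hx ↦ hdesc x hx.symm)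
    fun x hx ↦ hasc x hx.symm
  exact ⟨β, hkβ, hβz, fun x hx ↦ (hmaps hx.symm).symm⟩

theorem exists_mapsTo_Icc_of_swap (hh : Continuous h) (hJ : J.OrdConnected)
    (hV : ¬HasValley h J) (hP : ¬HasPeak h J) {z₁ z₂ s r t : α} (hz : z₁ ≤ z₂) (hs : s < z₁)
    (hr : z₂ < r) (hrt : r < t) (hsr : z₂ < h s) (hrs : h r < z₁) (ht : t ≤ h t) (hsJ : s ∈ J)
    (htJ : t ∈ J) (hJt : ∀ x ∈ J, h x ≤ t → h x ∈ J) (hasc : ∀ x ∈ Ico s z₁, x < h x)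
    (hdesc : ∀ x ∈ Ioo z₂ t, h x < x) :
    ∃ p q, p < z₁ ∧ z₂ < q ∧ q < t ∧ Icc p q ⊆ J ∧ MapsTo h (Icc p q) (Icc p q) := by
  have hz₁t : z₁ < t := hz.trans_lt (hr.trans hrt)
  have hsub : Icc s t ⊆ J := hJ.out hsJ htJ
  obtain ⟨w, hw, hmin⟩ := isCompact_Icc.exists_isMinOn (nonempty_Icc.2 hz₁t.le) hh.continuousOn
  have hwz : h w < z₁ := (hmin ⟨hz.trans hr.le, hrt.le⟩).trans_lt hrs
  have hwJ : h w ∈ J := hJt w (hsub ⟨hs.le.trans hw.1, hw.2⟩) (hwz.trans hz₁t).le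
  by_cases hascw : ∀ x ∈ Ico (h w) z₁, x < h x
  · obtain ⟨q, hzq, hqt, hmaps⟩ := exists_mapsTo_Icc_of_isMinOn hh hJ hV hz hr hrt hrs ht htJ hw
      hmin hwJ hascw hdesc
    exact ⟨h w, q, hwz, hzq, hqt, (Icc_subset_Icc_right hqt.le).trans (hJ.out hwJ htJ), hmaps⟩
  push Not at hascw
  obtain ⟨k₀, hk₀, hk₀h⟩ := hascw
  have hk₀s : k₀ < s := lt_of_not_ge fun hsk ↦ (hasc k₀ ⟨hsk, hk₀.2⟩).not_ge hk₀h
  obtain ⟨k, ⟨hk₀k, hks⟩, hk, hasck⟩ := exists_last_le hh continuous_id hk₀s.le hk₀h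
  have hwk : h w ≤ k := hk₀.1.trans hk₀k
  have hks : k < s := hks.lt_of_ne fun heq ↦ (hasc s ⟨le_rfl, hs⟩).not_ge (heq ▸ hk)
  have hsubk : Icc k t ⊆ J := hJ.out (hJ.out hwJ htJ ⟨hwk, (hks.trans (hs.trans hz₁t)).le⟩) htJ
  obtain ⟨q, hq, hmax⟩ := isCompact_Icc.exists_isMaxOn
    (nonempty_Icc.2 (hks.le.trans (hs.le.trans hz))) hh.continuousOn
  have hqt : h q < t := lt_of_isMinOn_of_not_hasValley hJ hV hz hr hrt hrs ht htJ hw hmin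
    (hsubk ⟨hq.1, hq.2.trans (hr.trans hrt).le⟩) (hwk.trans hq.1) hq.2
  obtain ⟨β, hkβ, hβz, hmaps⟩ := exists_mapsTo_Icc_of_isMaxOn hh hJ hP hz hs hks hsr hk
    (hsubk ⟨le_rfl, (hks.trans (hs.trans hz₁t)).le⟩) hq hmax
    (hJt q (hsubk ⟨hq.1, hq.2.trans (hr.trans hrt).le⟩) hqt.le)
    (fun x hx ↦ (le_or_gt x s).elim (fun hxs ↦ hasck x ⟨hx.1, hxs⟩) fun hsx ↦ hasc x ⟨hsx.le, hx.2⟩)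
    fun x hx ↦ hdesc x ⟨hx.1, hx.2.trans_lt hqt⟩
  exact ⟨β, h q, hβz, hsr.trans_le (hmax ⟨hks.le, hs.le.trans hz⟩), hqt,
    (Icc_subset_Icc hkβ.le hqt.le).trans hsubk, hmaps⟩

theorem IsOrbit.exists_mapsTo_Icc [DenselyOrdered α] (hy : IsOrbit h y) (hh : Continuous h)
    (hJ : J.OrdConnected) (hV : ¬HasValley h J) (hP : ¬HasPeak h J) {e : α} (heJ : e ∈ J)
    (he : e ≤ h e) (hJe : ∀ x ∈ J, h x ≤ e → h x ∈ J) (hyJ : ∀ n, y n ∈ J) (hye : ∀ n, y n < e)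
    (hb : BddBelow (range y)) (hconv : ¬∃ l, Tendsto y atTop (𝓝 l)) :
    ∃ p ζ q, p < ζ ∧ ζ < q ∧ q < e ∧ Icc p q ⊆ J ∧ IsFixedPt h ζ ∧
      MapsTo h (Icc p q) (Icc p q) := by
  obtain ⟨z, ho⟩ := hy.exists_oscillatesAbout hh hJ hyJ hV hP
    ⟨e, forall_mem_range.2 fun n ↦ (hye n).le⟩ hb hconv
  obtain ⟨z₁, hz₁, -, hlt₁, hmax₁⟩ := ho.exists_fixed_left hh
  obtain ⟨z₂, hz₂, -, hgt₂, hmin₂⟩ := ho.exists_fixed_right hh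
  obtain ⟨m, hmz, hzm, hasc⟩ := ho.exists_upward_forall_lt hh hJ hyJ hP hz₁ hmax₁
  obtain ⟨n, hzn, hnz, hdesc⟩ := ho.exists_downward_forall_lt hh hJ hyJ hV hz₂ hmin₂
  obtain ⟨t, ⟨hnt, hte⟩, ht, hdesct⟩ := exists_first_le continuous_id hh (hye n).le he
  have hnt : y n < t := hnt.lt_of_ne fun heq ↦ (hdesc _ ⟨hgt₂ n hzn, le_rfl⟩).not_ge (heq ▸ ht)
  have hdesc : ∀ x ∈ Ioo z₂ t, h x < x := fun x hx ↦
    (le_or_gt x (y n)).elim (fun hxn ↦ hdesc x ⟨hx.1, hxn⟩) fun hnx ↦ hdesct x ⟨hnx.le, hx.2⟩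
  obtain ⟨p, q, hp, hq, hqt, hpq, hmaps⟩ := exists_mapsTo_Icc_of_swap hh hJ hV hP
    (hz₁.trans hz₂) (hlt₁ m hmz) (hgt₂ n hzn) hnt (ho.orbit m ▸ hgt₂ _ hzm)
    (ho.orbit n ▸ hlt₁ _ hnz) ht (hyJ m) (hJ.out (hyJ n) heJ ⟨hnt.le, hte⟩)
    (fun x hx hxt ↦ hJe x hx (hxt.trans hte)) hasc hdesc
  exact ⟨p, z, q, hp.trans_le hz₁, hz₂.trans_lt hq, hqt.trans_le hte, hpq, ho.fixed, hmaps⟩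

end Invariant

/-! ### Horseshoes and periodic points -/

/-- `J₀` and `J₁` form a horseshoe of `g`: each is a compact interval whose image covers both of
them, and they have at most one common point. The intervals are required to be nondegenerate, as
otherwise a single fixed point would be a horseshoe. -/
structure IsHorseshoe {α : Type*} [TopologicalSpace α] (g : α → α) (J₀ J₁ : Set α) : Prop where
  isCompact_left : IsCompact J₀
  isCompact_right : IsCompact J₁
  isPreconnected_left : IsPreconnected J₀
  isPreconnected_right : IsPreconnected J₁
  nontrivial_left : J₀.Nontrivial
  nontrivial_right : J₁.Nontrivial
  subsingleton_inter : (J₀ ∩ J₁).Subsingleton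
  subset_image_left : J₀ ∪ J₁ ⊆ g '' J₀
  subset_image_right : J₀ ∪ J₁ ⊆ g '' J₁

theorem IsHorseshoe.symm {α : Type*} [TopologicalSpace α] {g : α → α} {J₀ J₁ : Set α}
    (h : IsHorseshoe g J₀ J₁) : IsHorseshoe g J₁ J₀ where
  isCompact_left := h.isCompact_right
  isCompact_right := h.isCompact_left
  isPreconnected_left := h.isPreconnected_right
  isPreconnected_right := h.isPreconnected_left
  nontrivial_left := h.nontrivial_right
  nontrivial_right := h.nontrivial_left
  subsingleton_inter := inter_comm J₁ J₀ ▸ h.subsingleton_inter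
  subset_image_left := union_comm J₁ J₀ ▸ h.subset_image_right
  subset_image_right := union_comm J₁ J₀ ▸ h.subset_image_left

theorem exists_eq_Icc_of_nontrivial {α : Type*} [ConditionallyCompleteLinearOrder α]
    [TopologicalSpace α] [OrderTopology α] {J : Set α} (hc : IsCompact J) (hJ : IsPreconnected J)
    (hn : J.Nontrivial) : ∃ u v, u < v ∧ J = Icc u v := by
  have heq := eq_Icc_of_connected_compact ⟨hn.nonempty, hJ⟩ hc
  exact ⟨_, _, lt_of_not_ge fun hge ↦
    (subsingleton_Icc_of_ge hge).not_nontrivial (heq ▸ hn), heq⟩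

section Covering

variable {α β : Type*} [ConditionallyCompleteLinearOrder α] [TopologicalSpace α] [OrderTopology α]
  [DenselyOrdered α]

section

variable [LinearOrder β] [TopologicalSpace β] [OrderClosedTopology β] {f : α → β} {a b : α} {c : β}

theorem exists_last_eq (hf : Continuous f) (hab : a ≤ b) (ha : f a ≤ c) (hb : c < f b) :
    ∃ s ∈ Ico a b, f s = c ∧ ∀ x ∈ Ioc s b, c < f x := by
  obtain ⟨s, hs, hsc, hgt⟩ := exists_last_le hf continuous_const hab ha
  obtain ⟨w, hw, hwc⟩ := intermediate_value_Icc hs.2 hf.continuousOn ⟨hsc, hb.le⟩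
  rcases hw.1.eq_or_lt with rfl | hsw
  · exact ⟨s, ⟨hs.1, hs.2.lt_of_ne fun heq ↦ hb.not_ge (heq ▸ hsc)⟩, hwc, hgt⟩
  · exact absurd hwc (hgt w ⟨hsw, hw.2⟩).ne'

theorem exists_first_eq (hf : Continuous f) (hab : a ≤ b) (ha : c < f a) (hb : f b ≤ c) :
    ∃ t ∈ Ioc a b, f t = c ∧ ∀ x ∈ Ico a t, c < f x := by
  obtain ⟨t, ht, htc, hgt⟩ := exists_last_eq (α := αᵒᵈ) (a := b) (b := a) hf hab hb ha
  exact ⟨t, ht.symm, htc, fun x hx ↦ hgt x hx.symm⟩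

theorem exists_Icc_image_eq (hf : Continuous f) (hab : a ≤ b) (hfab : f a < f b) :
    ∃ u v, Icc u v ⊆ Icc a b ∧ f '' Icc u v = Icc (f a) (f b) ∧
      (Icc u v ∩ f ⁻¹' {f a}).Subsingleton ∧ (Icc u v ∩ f ⁻¹' {f b}).Subsingleton := by
  obtain ⟨v, hv, hvb, hlt⟩ := exists_first_eq (β := βᵒᵈ) hf hab hfab le_rfl
  obtain ⟨u, hu, hua, hgt⟩ := exists_last_eq hf hv.1.le le_rfl (hfab.trans_eq hvb.symm)
  replace hlt : ∀ x ∈ Ico u v, f x < f b := fun x hx ↦ hlt x ⟨hu.1.trans hx.1, hx.2⟩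
  have himage : f '' Icc u v ⊆ Icc (f a) (f b) := image_subset_iff.2 fun x hx ↦
    ⟨hx.1.eq_or_lt.elim (fun heq ↦ heq ▸ hua.ge) fun hux ↦ (hgt x ⟨hux, hx.2⟩).le,
      hx.2.eq_or_lt.elim (fun heq ↦ heq ▸ Eq.le (α := β) hvb) fun hxv ↦ (hlt x ⟨hx.1, hxv⟩).le⟩
  have hfibre : Icc u v ∩ f ⁻¹' {f a} ⊆ {u} := fun x hx ↦
    hx.1.1.eq_or_lt.elim Eq.symm fun hux ↦ absurd hx.2 (hgt x ⟨hux, hx.1.2⟩).ne'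
  have hfibre' : Icc u v ∩ f ⁻¹' {f b} ⊆ {v} := fun x hx ↦
    hx.1.2.eq_or_lt.elim id fun hxv ↦ absurd hx.2 (hlt x ⟨hx.1.1, hxv⟩).ne
  exact ⟨u, v, Icc_subset_Icc hu.1 hv.2,
    himage.antisymm (hua ▸ hvb ▸ intermediate_value_Icc hu.2.le hf.continuousOn),
    subsingleton_singleton.anti hfibre, subsingleton_singleton.anti hfibre'⟩

theorem exists_uIcc_image_eq (hf : Continuous f) {p q : α} (hpq : f p < f q) :
    ∃ u v, uIcc u v ⊆ uIcc p q ∧ f '' uIcc u v = Icc (f p) (f q) ∧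
      (uIcc u v ∩ f ⁻¹' {f p}).Subsingleton ∧ (uIcc u v ∩ f ⁻¹' {f q}).Subsingleton := by
  rcases le_total p q with hle | hle
  · obtain ⟨u, v, hsub, himage, hp, hq⟩ := exists_Icc_image_eq hf hle hpq
    have huv : u ≤ v := nonempty_Icc.1 (image_nonempty.1 (himage ▸ nonempty_Icc.2 hpq.le))
    exact ⟨u, v, by rwa [uIcc_of_le huv, uIcc_of_le hle], by rwa [uIcc_of_le huv],
      by rwa [uIcc_of_le huv], by rwa [uIcc_of_le huv]⟩
  · obtain ⟨v, u, hsub, himage, hq, hp⟩ := exists_Icc_image_eq (β := βᵒᵈ) hf hle hpq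
    have hvu : v ≤ u :=
      nonempty_Icc.1 (image_nonempty.1 (himage ▸ (nonempty_Icc (α := βᵒᵈ)).2 hpq.le))
    refine ⟨u, v, by rwa [uIcc_of_ge hvu, uIcc_of_ge hle], ?_,
      by rwa [uIcc_of_ge hvu], by rwa [uIcc_of_ge hvu]⟩
    rw [uIcc_of_ge hvu]
    exact himage.trans Icc_toDual

end

namespace IsHorseshoe

variable {g : α → α} {J₀ J₁ : Set α}

theorem of_uIcc {p q p' q' : α} (hsub : (uIcc p q ∩ uIcc p' q').Subsingleton)
    (hleft : uIcc p q ∪ uIcc p' q' ⊆ g '' uIcc p q)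
    (hright : uIcc p q ∪ uIcc p' q' ⊆ g '' uIcc p' q')
    (hne : (uIcc p q ∪ uIcc p' q').Nontrivial) : IsHorseshoe g (uIcc p q) (uIcc p' q') where
  isCompact_left := isCompact_uIcc
  isCompact_right := isCompact_uIcc
  isPreconnected_left := isPreconnected_uIcc
  isPreconnected_right := isPreconnected_uIcc
  nontrivial_left := nontrivial_of_image g _ (hne.mono hleft)
  nontrivial_right := nontrivial_of_image g _ (hne.mono hright)
  subsingleton_inter := hsub
  subset_image_left := hleft
  subset_image_right := hright

theorem exists_uIcc_itinerary (h : IsHorseshoe g J₀ J₁) (hg : Continuous g) (n : ℕ) :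
    ∃ u v, uIcc u v ⊆ J₀ ∧ J₀ ∪ J₁ ⊆ g^[n + 1] '' uIcc u v ∧
      ∀ i ∈ Icc 1 n, MapsTo g^[i] (uIcc u v) J₁ := by
  induction n with
  | zero =>
    obtain ⟨u, v, huv, rfl⟩ :=
      exists_eq_Icc_of_nontrivial h.isCompact_left h.isPreconnected_left h.nontrivial_left
    refine ⟨u, v, ?_⟩
    rw [uIcc_of_le huv.le]
    exact ⟨subset_rfl, h.subset_image_left, fun i hi ↦ absurd hi.1 (by have := hi.2; lia)⟩
  | succ n ih =>
    obtain ⟨u, v, huv, hcover, hitin⟩ := ih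
    obtain ⟨c, d, hcd, hJ₁⟩ :=
      exists_eq_Icc_of_nontrivial h.isCompact_right h.isPreconnected_right h.nontrivial_right
    have hJ₁cover : Icc c d ⊆ g^[n + 1] '' uIcc u v := hJ₁ ▸ subset_union_right.trans hcover
    obtain ⟨p, hp, hp_eq⟩ := hJ₁cover (left_mem_Icc.2 hcd.le)
    obtain ⟨q, hq, hq_eq⟩ := hJ₁cover (right_mem_Icc.2 hcd.le)
    obtain ⟨u', v', hsub, himage, -⟩ :=
      exists_uIcc_image_eq (hg.iterate (n + 1)) (hp_eq.trans_lt (hcd.trans_eq hq_eq.symm))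
    rw [hp_eq, hq_eq, ← hJ₁] at himage
    have hsub' : uIcc u' v' ⊆ uIcc u v := hsub.trans (uIcc_subset_uIcc hp hq)
    refine ⟨u', v', hsub'.trans huv, ?_, fun i hi ↦ ?_⟩
    · rw [iterate_succ', image_comp, himage]
      exact h.subset_image_right
    · rcases hi.2.eq_or_lt with rfl | hin
      · exact mapsTo_iff_image_subset.2 himage.subset
      · exact (hitin i ⟨hi.1, Nat.le_of_lt_succ hin⟩).mono_left hsub'

theorem exists_isPeriodicPt (h : IsHorseshoe g J₀ J₁) (hg : Continuous g) {m : ℕ} (hm : 1 ≤ m) :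
    ∃ w ∈ J₀, IsPeriodicPt g m w ∧ ∀ i, 0 < i → i < m → g^[i] w ∈ J₁ := by
  obtain ⟨n, rfl⟩ := Nat.exists_eq_add_of_le' hm
  obtain ⟨u, v, huv, hcover, hitin⟩ := h.exists_uIcc_itinerary hg n
  obtain ⟨w, hw, hfix⟩ := exists_mem_Icc_isFixedPt_of_surjOn (hg.iterate (n + 1)).continuousOn
    inf_le_sup (huv.trans (subset_union_left.trans hcover))
  exact ⟨w, huv hw, hfix, fun i hi hin ↦ hitin i ⟨hi, Nat.le_of_lt_succ hin⟩ hw⟩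

theorem exists_minimalPeriod_eq {f : α → α} (h : IsHorseshoe f^[2] J₀ J₁) (hf : Continuous f)
    {z : α} (hJ₀ : J₀ ⊆ Iio z) (hz : ∀ x ∈ J₀ ∪ J₁, z ≤ f x) (hinter : ∀ w ∈ J₀ ∩ J₁, f^[2] w ∉ J₁)
    {m : ℕ} (hm : 1 ≤ m) : ∃ w, minimalPeriod f w = 2 * m := by
  obtain ⟨w, hw, hper, hitin⟩ := h.exists_isPeriodicPt (hf.iterate 2) hm
  have hper' : IsPeriodicPt f (2 * m) w := by rwa [IsPeriodicPt, iterate_mul]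
  refine ⟨w, (hper'.minimalPeriod_le (by lia)).antisymm (le_of_not_gt fun hlt ↦ ?_)⟩
  have hpos := hper'.minimalPeriod_pos (by lia)
  have hreturn : IsPeriodicPt f (minimalPeriod f w) w := isPeriodicPt_minimalPeriod f w
  rcases Nat.even_or_odd' (minimalPeriod f w) with ⟨i, hi | hi⟩
  · rw [hi, IsPeriodicPt, iterate_mul, IsFixedPt] at hreturn
    have hwJ₁ : w ∈ J₁ := hreturn ▸ hitin i (by lia) (by lia)
    refine hinter w ⟨hw, hwJ₁⟩ ?_
    have hsucc : (f^[2])^[i + 1] w = f^[2] w := by rw [iterate_succ_apply', hreturn]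
    rcases (by lia : i + 1 < m ∨ i + 1 = m) with him | rfl
    · exact hsucc ▸ hitin (i + 1) (by lia) him
    · exact hsucc ▸ hper.symm ▸ hwJ₁
  · have hmem : (f^[2])^[i] w ∈ J₀ ∪ J₁ := by
      rcases i.eq_zero_or_pos with rfl | hipos
      · exact .inl hw
      · exact .inr (hitin i hipos (by lia))
    rw [hi, IsPeriodicPt, iterate_succ', iterate_mul] at hreturn
    exact ((hz _ hmem).trans_eq hreturn).not_gt (hJ₀ hw)

end IsHorseshoe

end Covering

/-! ### Turbulence of the second iterate -/

/-- Turbulence of `g` on `K`, with nondegenerate intervals. -/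
def Turbulent {α : Type*} [TopologicalSpace α] (g : α → α) (K : Set α) : Prop :=
  ∃ J₀ ⊆ K, ∃ J₁ ⊆ K, IsHorseshoe g J₀ J₁

theorem Turbulent.mono {α : Type*} [TopologicalSpace α] {g : α → α} {K L : Set α} (hKL : K ⊆ L) :
    Turbulent g K → Turbulent g L :=
  fun ⟨J₀, hJ₀, J₁, hJ₁, h⟩ ↦ ⟨J₀, hJ₀.trans hKL, J₁, hJ₁.trans hKL, h⟩

/-- The behaviour to be established: all even periods occur, and the second iterate is turbulent on
both sides of some point. -/
def EvenChaos {α : Type*} [Preorder α] [TopologicalSpace α] (f : α → α) : Prop :=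
  (∀ m, 1 ≤ m → ∃ w, minimalPeriod f w = 2 * m) ∧
    ∃ z, Turbulent f^[2] (Iic z) ∧ Turbulent f^[2] (Ici z)

theorem EvenChaos.dual {α : Type*} [Preorder α] [TopologicalSpace α] {f : α → α}
    (h : EvenChaos (α := αᵒᵈ) f) : EvenChaos f :=
  let ⟨hper, z, hIic, hIci⟩ := h
  ⟨hper, z, hIci, hIic⟩

section ThreePoints

theorem nontrivial_Icc {α : Type*} [LinearOrder α] {a b : α} (hab : a < b) : (Icc a b).Nontrivial :=
  not_subsingleton_iff.1 (mt subsingleton_Icc_iff.1 hab.not_ge)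

theorem subsingleton_uIcc_inter_or_subset {α : Type*} [LinearOrder α] (a b c : α) :
    (uIcc a b ∩ uIcc b c).Subsingleton ∨ uIcc a b ⊆ uIcc b c ∨ uIcc b c ⊆ uIcc a b := by
  rcases le_total a b with hab | hba <;> rcases le_total b c with hbc | hcb
  · rw [uIcc_of_le hab, uIcc_of_le hbc, Icc_inter_Icc_eq_singleton hab hbc]
    exact .inl subsingleton_singleton
  · rw [uIcc_of_le hab, uIcc_of_ge hcb]
    exact .inr <| (le_total c a).imp Icc_subset_Icc_left Icc_subset_Icc_left
  · rw [uIcc_of_ge hba, uIcc_of_le hbc]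
    exact .inr <| (le_total a c).imp Icc_subset_Icc_right Icc_subset_Icc_right
  · rw [uIcc_of_ge hba, uIcc_of_ge hcb, inter_comm, Icc_inter_Icc_eq_singleton hcb hba]
    exact .inl subsingleton_singleton

variable {α : Type*} [ConditionallyCompleteLinearOrder α] [TopologicalSpace α] [OrderTopology α]
  [DenselyOrdered α] {f : α → α} {s r t z : α}

theorem turbulent_uIcc_of_subset_image (hf : Continuous f) (hsr : s < r) (hrt : r < t) {c d : α}
    (hcd : Icc s t ⊆ f '' uIcc c d) (hleft : uIcc c d ⊆ f '' Icc s r)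
    (hright : uIcc c d ⊆ f '' Icc r t) : Turbulent f^[2] (uIcc c d) := by
  obtain ⟨p, hp, rfl⟩ := hcd ⟨le_rfl, (hsr.trans hrt).le⟩
  obtain ⟨q, hq, rfl⟩ := hcd ⟨hsr.le, hrt.le⟩
  obtain ⟨w, hw, rfl⟩ := hcd ⟨(hsr.trans hrt).le, le_rfl⟩
  obtain ⟨u, v, hsub, himage, -, hfibre⟩ := exists_uIcc_image_eq hf hsr
  obtain ⟨u', v', hsub', himage', -⟩ := exists_uIcc_image_eq hf hrt
  replace hsub := hsub.trans (uIcc_subset_uIcc hp hq)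
  replace hsub' := hsub'.trans (uIcc_subset_uIcc hq hw)
  have hinter : uIcc u v ∩ uIcc u' v' ⊆ uIcc u v ∩ f ⁻¹' {f q} := fun x hx ↦
    ⟨hx.1, (himage.subset (mem_image_of_mem f hx.1)).2.antisymm
      (himage'.subset (mem_image_of_mem f hx.2)).1⟩
  refine ⟨_, hsub, _, hsub', .of_uIcc (hfibre.anti hinter) ?_ ?_ ?_⟩
  · rw [iterate_succ, iterate_one, image_comp, himage]
    exact (union_subset hsub hsub').trans hleft
  · rw [iterate_succ, iterate_one, image_comp, himage']
    exact (union_subset hsub hsub').trans hright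
  · exact (nontrivial_of_image f _ (himage ▸ nontrivial_Icc hsr)).mono subset_union_left

/-- The interval between `f s` and `f r` and the one between `f r` and `f t` form a horseshoe if
they have only `f r` in common. Otherwise one contains the other, and the smaller one has
subintervals mapped onto `[s, r]` and `[r, t]`, which form a horseshoe. -/
theorem turbulent_of_mapsTo (hf : Continuous f) (hsr : s < r) (hrt : r < t)
    (hleft : Icc s t ⊆ uIcc (f^[2] s) (f^[2] r)) (hright : Icc s t ⊆ uIcc (f^[2] r) (f^[2] t))
    {K : Set α} (hK : K.OrdConnected) (hmaps : MapsTo f (Icc s t) K) : Turbulent f^[2] K := by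
  have hst : s < t := hsr.trans hrt
  have hs := hmaps ⟨le_rfl, hst.le⟩
  have hr := hmaps ⟨hsr.le, hrt.le⟩
  have ht := hmaps ⟨hst.le, le_rfl⟩
  set A := uIcc (f s) (f r)
  set B := uIcc (f r) (f t)
  have hA : Icc s t ⊆ f '' A := hleft.trans (intermediate_value_uIcc hf.continuousOn)
  have hB : Icc s t ⊆ f '' B := hright.trans (intermediate_value_uIcc hf.continuousOn)
  have hA' : A ⊆ f '' Icc s r := uIcc_of_le hsr.le ▸ intermediate_value_uIcc hf.continuousOn
  have hB' : B ⊆ f '' Icc r t := uIcc_of_le hrt.le ▸ intermediate_value_uIcc hf.continuousOn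
  have hAB : A ∪ B ⊆ f '' Icc s t :=
    union_subset (hA'.trans (image_mono (Icc_subset_Icc_right hrt.le)))
      (hB'.trans (image_mono (Icc_subset_Icc_left hsr.le)))
  rcases subsingleton_uIcc_inter_or_subset (f s) (f r) (f t) with hinter | hsub | hsub
  · refine ⟨A, hK.uIcc_subset hs hr, B, hK.uIcc_subset hr ht, .of_uIcc hinter ?_ ?_ ?_⟩
    · exact hAB.trans ((image_mono hA).trans_eq (image_image ..))
    · exact hAB.trans ((image_mono hB).trans_eq (image_image ..))
    · exact (nontrivial_of_image f _ ((nontrivial_Icc hst).mono hA)).mono subset_union_left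
  · exact (turbulent_uIcc_of_subset_image hf hsr hrt hA hA' (hsub.trans hB')).mono
      (hK.uIcc_subset hs hr)
  · exact (turbulent_uIcc_of_subset_image hf hsr hrt hB (hsub.trans hA') hB').mono
      (hK.uIcc_subset hr ht)

theorem isHorseshoe_Icc (hf : Continuous f) (hsr : s < r) (hrt : r < t)
    (hleft : Icc s t ⊆ uIcc (f s) (f r)) (hright : Icc s t ⊆ uIcc (f r) (f t)) :
    IsHorseshoe f (Icc s r) (Icc r t) := by
  have hunion : Icc s r ∪ Icc r t = Icc s t := Icc_union_Icc_eq_Icc hsr.le hrt.le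
  have hinter : Icc s r ∩ Icc r t = {r} := Icc_inter_Icc_eq_singleton hsr.le hrt.le
  rw [← uIcc_of_le hsr.le, ← uIcc_of_le hrt.le] at hunion hinter ⊢
  refine .of_uIcc ?_ ?_ ?_ ?_
  · exact hinter ▸ subsingleton_singleton
  · exact hunion ▸ hleft.trans (intermediate_value_uIcc hf.continuousOn)
  · exact hunion ▸ hright.trans (intermediate_value_uIcc hf.continuousOn)
  · exact hunion ▸ nontrivial_Icc (hsr.trans hrt)

theorem evenChaos_of_hasValley (hf : Continuous f) {J : Set α} (hJ : J.OrdConnected)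
    (hJz : J ⊆ Iic z) (hzJ : ∀ x ∈ J, z ≤ f x) (hV : HasValley f^[2] J) :
    EvenChaos f := by
  obtain ⟨s, hs, r, hr, t, ht, hsr, hrt, hfs, hfr, hft⟩ := hV
  have hleft : Icc s t ⊆ uIcc (f^[2] s) (f^[2] r) :=
    (Icc_subset_Icc hfr hfs).trans Icc_subset_uIcc'
  have hright : Icc s t ⊆ uIcc (f^[2] r) (f^[2] t) :=
    (Icc_subset_Icc hfr hft).trans Icc_subset_uIcc
  have hhorse := isHorseshoe_Icc (hf.iterate 2) hsr hrt hleft hright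
  have hsub : Icc s r ∪ Icc r t ⊆ J := union_subset (hJ.out hs hr) (hJ.out hr ht)
  refine ⟨fun m hm ↦ hhorse.exists_minimalPeriod_eq hf
    (fun x hx ↦ hx.2.trans_lt (hrt.trans_le (hJz ht))) (fun x hx ↦ hzJ x (hsub hx)) ?_ hm, z,
    ⟨_, subset_union_left.trans (hsub.trans hJz), _, subset_union_right.trans (hsub.trans hJz),
      hhorse⟩, turbulent_of_mapsTo hf hsr hrt hleft hright ordConnected_Ici
        fun x hx ↦ hzJ x (hJ.out hs ht hx)⟩
  rintro w ⟨hw, hw'⟩ hmem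
  obtain rfl : w = r := hw.2.antisymm hw'.1
  exact (hmem.1.trans hfr).not_gt hsr

theorem evenChaos_of_hasPeak (hf : Continuous f) (hz : IsFixedPt f z) {J : Set α}
    (hJ : J.OrdConnected) (hJz : J ⊆ Iic z) (hzJ : ∀ x ∈ J, z ≤ f x) (hP : HasPeak f^[2] J) :
    EvenChaos f := by
  obtain ⟨t, ht, r, hr, s, hs, hrt, hsr, hft, hfr, hfs⟩ := hP
  have hleft : Icc s t ⊆ uIcc (f^[2] s) (f^[2] r) :=
    (Icc_subset_Icc hfs hfr).trans Icc_subset_uIcc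
  have hright : Icc s t ⊆ uIcc (f^[2] r) (f^[2] t) :=
    (Icc_subset_Icc hft hfr).trans Icc_subset_uIcc'
  have hhorse := isHorseshoe_Icc (hf.iterate 2) hsr hrt hleft hright
  have hsub : Icc s r ∪ Icc r t ⊆ J := union_subset (hJ.out hs hr) (hJ.out hr ht)
  have htz : t < z := (hJz ht).lt_of_ne fun heq ↦
    (hft.trans_lt (hsr.trans hrt)).ne (heq ▸ hz.iterate 2)
  refine ⟨fun m hm ↦ hhorse.symm.exists_minimalPeriod_eq hf
    (fun x hx ↦ hx.2.trans_lt htz) (fun x hx ↦ hzJ x (hsub hx.symm)) ?_ hm, z,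
    ⟨_, subset_union_left.trans (hsub.trans hJz), _, subset_union_right.trans (hsub.trans hJz),
      hhorse⟩, turbulent_of_mapsTo hf hsr hrt hleft hright ordConnected_Ici
        fun x hx ↦ hzJ x (hJ.out hs ht hx)⟩
  rintro w ⟨hw, hw'⟩ hmem
  obtain rfl : r = w := hw.1.antisymm hw'.2
  exact (hfr.trans hmem.2).not_gt hrt

end ThreePoints

/-! ### Orbits whose even times do not converge -/

theorem IsOrbit.tendsto_succ {α : Type*} [TopologicalSpace α] {f : α → α} {y : ℕ → α} {ι : Type*}
    {l : Filter ι} {φ : ι → ℕ} {c : α} (hy : IsOrbit f y) (hf : Continuous f)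
    (hc : Tendsto (fun i ↦ y (φ i)) l (𝓝 c)) : Tendsto (fun i ↦ y (φ i + 1)) l (𝓝 (f c)) := by
  simpa only [hy _, comp_def] using (hf.tendsto c).comp hc

theorem IsOrbit.not_tendsto_even_tail {α : Type*} [TopologicalSpace α] {f : α → α} {y : ℕ → α}
    (hy : IsOrbit f y) (hf : Continuous f)
    (hconv : ¬∃ l, Tendsto (fun n ↦ y (2 * n)) atTop (𝓝 l)) (N : ℕ) :
    ¬∃ l, Tendsto (fun n ↦ y (N + 2 * n)) atTop (𝓝 l) := by
  rintro ⟨l, hl⟩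
  rcases Nat.even_or_odd' N with ⟨k, rfl | rfl⟩
  · refine hconv ⟨l, (tendsto_add_atTop_iff_nat k).1 (hl.congr fun n ↦ ?_)⟩
    rw [mul_add, add_comm]
  · refine hconv ⟨f l, (tendsto_add_atTop_iff_nat (k + 1)).1 ((hy.tendsto_succ hf hl).congr ?_)⟩
    exact fun n ↦ congrArg y (by ring)

theorem le_of_mem_Icc_iterate_two {α : Type*} [LinearOrder α] {f : α → α} {x z e : α}
    (hS : ¬HasSpiral f) (hz : IsFixedPt f z) (hez : e ≤ z)
    (hxe : x ≤ e) (hx : ∀ w ∈ Icc x e, z ≤ f w) : ∀ w ∈ Icc (f^[2] x) e, z ≤ f w := by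
  by_contra! ⟨w, hw, hwz⟩
  have hwx : w < x := lt_of_not_ge fun hxw ↦ hwz.not_ge (hx w ⟨hxw, hw.2⟩)
  have hxz : x < z := (hxe.trans hez).lt_of_ne fun heq ↦
    (heq ▸ hwx).not_ge ((hz.iterate 2).ge.trans (heq ▸ hw.1))
  have hzx : z < f x := (hx x ⟨le_rfl, hxe⟩).lt_of_ne fun heq ↦
    (hwx.trans hxz).not_ge ((hz.ge.trans (congrArg f heq).le).trans hw.1)
  exact hS ⟨w, x, z, f x, hwx, hxz, hzx, hz, hwz.le, le_rfl, hw.1⟩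

section Dichotomy

variable {α : Type*} [ConditionallyCompleteLinearOrder α] [TopologicalSpace α] [OrderTopology α]
  {f : α → α} {x y : ℕ → α} {z : α}

theorem OscillatesAbout.exists_alternating_tail (ho : OscillatesAbout f y z) (hf : Continuous f)
    (hS : ¬HasSpiral f) (hS' : ¬HasSpiral (α := αᵒᵈ) f) :
    ∃ N, ∀ n, y (N + 2 * n) < z ∧ z < y (N + 2 * n + 1) := by
  obtain ⟨M, hM⟩ := eventually_atTop.1
    ((ho.eventually_upward hf hS).and (ho.dual.eventually_upward hf hS'))
  obtain ⟨N, hMN, hN⟩ := frequently_atTop.1 ho.frequently_lt M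
  refine ⟨N, fun n ↦ ?_⟩
  induction n with
  | zero => exact ⟨hN, (hM N hMN).1 hN⟩
  | succ n ih =>
    have hlt := (hM _ (by lia)).2 ih.2
    exact ⟨hlt, (hM _ (by lia)).1 hlt⟩

variable [DenselyOrdered α]

theorem HasSpiral.evenChaos (hS : HasSpiral f) (hf : Continuous f) : EvenChaos f := by
  obtain ⟨x, u, z, v, hxu, huz, hzv, hz, hfx, hvu, hvx⟩ := hS
  obtain ⟨r, hr, rfl⟩ := intermediate_value_Icc' huz.le hf.continuousOn ⟨hz.trans_le hzv.le, hvu⟩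
  obtain ⟨s, hs, hfs, hgt_left⟩ := exists_last_eq hf (hxu.le.trans hr.1) hfx hzv
  obtain ⟨t, ht, hft, hgt_right⟩ := exists_first_eq hf hr.2 hzv hz.le
  have hgt : ∀ w ∈ Icc s t, z ≤ f w := fun w hw ↦ by
    rcases hw.1.eq_or_lt with rfl | hsw
    · exact hfs.ge
    rcases hw.2.eq_or_lt with rfl | hwt
    · exact hft.ge
    · exact (le_total w r).elim (fun hwr ↦ (hgt_left w ⟨hsw, hwr⟩).le)
        fun hrw ↦ (hgt_right w ⟨hrw, hwt⟩).le
  have hst : s ≤ t := hs.2.le.trans ht.1.le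
  have hfix : ∀ w, f w = z → t ≤ f^[2] w := fun w hw ↦
    ht.2.trans_eq ((congrArg f hw).trans hz).symm
  exact evenChaos_of_hasValley hf ordConnected_Icc (fun w hw ↦ hw.2.trans ht.2) hgt
    ⟨s, ⟨le_rfl, hst⟩, r, ⟨hs.2.le, ht.1.le⟩, t, ⟨hst, le_rfl⟩, hs.2, ht.1, hfix s hfs,
      hvx.trans hs.1, hfix t hft⟩

theorem HasPeak.hasSpiral (hP : HasPeak f univ) (hf : Continuous f) : HasSpiral f := by
  obtain ⟨s, -, r, -, t, -, hrs, htr, hfs, hfr, hft⟩ := hP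
  obtain ⟨z, hz, hfix⟩ := exists_mem_Icc_isFixedPt hf.continuousOn hrs.le (hrs.le.trans hfr)
    (hfs.trans (htr.trans hrs).le)
  have hrz : r < z := hz.1.lt_of_ne fun heq ↦ (hrs.trans_le hfr).ne' (heq ▸ hfix)
  have hzs : z < s := hz.2.lt_of_ne fun heq ↦ (hfs.trans_lt (htr.trans hrs)).ne (heq ▸ hfix)
  exact ⟨t, r, z, s, htr, hrz, hzs, hfix, hft.trans (htr.trans hrz).le, hfr, hfs⟩

theorem exists_frequently_lt_frequently_gt (ha : BddAbove (range x)) (hb : BddBelow (range x))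
    (hconv : ¬∃ l, Tendsto x atTop (𝓝 l)) :
    ∃ c, (∃ᶠ n in atTop, x n < c) ∧ ∃ᶠ n in atTop, c < x n := by
  by_contra! hno
  exact hconv <| tendsto_of_no_upcrossings dense_univ
    (fun c _ d _ hcd hfreq ↦ hfreq.2 <| (hno c hfreq.1).mono fun n hn ↦ not_lt.2 (hn.trans hcd.le))
    ha.isBoundedUnder_of_range hb.isBoundedUnder_of_range

theorem exists_eq_forall_lt (hf : Continuous f) (hz : f z ≤ z) (hxz : ∀ n, x n < z)
    (hzx : ∀ n, z < f (x n)) (hstay : ∀ w n m, f w ≤ z → w < x n → n ≤ m → w < x m) {c : α}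
    (hlow : ∃ᶠ n in atTop, x n < c) (hhigh : ∃ᶠ n in atTop, c < x n) :
    ∃ e ≤ z, f e = z ∧ (∀ n, x n < e) ∧ ∃ N, ∀ n, N ≤ n → ∀ w ∈ Icc (x n) e, z ≤ f w := by
  have hlow_of_lt : ∀ w n, f w ≤ z → w < x n → w < c := fun w n hw hwn ↦
    let ⟨m, hnm, hm⟩ := frequently_atTop.1 hlow n
    (hstay w n m hw hwn hnm).trans hm
  obtain ⟨N, hN⟩ := hhigh.exists
  have hzc : z < f c := lt_of_not_ge fun hle ↦ (hlow_of_lt c N hle hN).false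
  obtain ⟨e, he, hfe, hgt⟩ := exists_first_eq hf (hN.trans (hxz N)).le hzc hz
  have hne : ∀ w n, f w ≤ z → w ≠ x n := fun w n hw heq ↦ (hzx n).not_ge (heq ▸ hw)
  refine ⟨e, he.2, hfe, fun n ↦ lt_of_not_ge fun hen ↦ ?_, N, fun n hn w hw ↦ ?_⟩
  · exact (hlow_of_lt e n hfe.le (hen.lt_of_ne (hne e n hfe.le))).not_gt he.1
  · by_contra! hwz
    have hwc : w < c := lt_of_not_ge fun hcw ↦
      (hw.2.eq_or_lt.elim (fun heq ↦ heq ▸ hfe.ge) fun hwe ↦ (hgt w ⟨hcw, hwe⟩).le).not_gt hwz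
    exact (hstay w N n hwz.le (hwc.trans hN) hn).not_ge hw.1

theorem exists_mapsTo_Icc_of_not_evenChaos (hf : Continuous f) (hz : IsFixedPt f z)
    (hchaos : ¬EvenChaos f) (hx : IsOrbit f^[2] x) (hxz : ∀ n, x n < z)
    (hzx : ∀ n, z < f (x n)) (hstay : ∀ w n m, f w ≤ z → w < x n → n ≤ m → w < x m)
    (hb : BddBelow (range x)) (hconv : ¬∃ l, Tendsto x atTop (𝓝 l)) :
    ∃ p ζ q, p < ζ ∧ ζ < q ∧ q < z ∧ (∀ w ∈ Icc p q, z ≤ f w) ∧ IsFixedPt f^[2] ζ ∧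
      MapsTo f^[2] (Icc p q) (Icc p q) := by
  obtain ⟨c, hlow, hhigh⟩ := exists_frequently_lt_frequently_gt
    ⟨z, forall_mem_range.2 fun n ↦ (hxz n).le⟩ hb hconv
  obtain ⟨e, hez, hfe, hxe, N, hN⟩ := exists_eq_forall_lt hf hz.le hxz hzx hstay hlow hhigh
  let J : Set α := {x | x ≤ e ∧ ∀ w ∈ Icc x e, z ≤ f w}
  have hJ : J.OrdConnected := ⟨fun u hu v hv w hw ↦
    ⟨hw.2.trans hv.1, fun i hi ↦ hu.2 i ⟨hw.1.trans hi.1, hi.2⟩⟩⟩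
  have hJz : J ⊆ Iic z := fun u hu ↦ hu.1.trans hez
  have hzJ : ∀ u ∈ J, z ≤ f u := fun u hu ↦ hu.2 u ⟨le_rfl, hu.1⟩
  have heJ : e ∈ J := ⟨le_rfl, fun w hw ↦ (hw.1.antisymm hw.2) ▸ hfe.ge⟩
  have hJe : ∀ u ∈ J, f^[2] u ≤ e → f^[2] u ∈ J := fun u hu hle ↦
    ⟨hle, le_of_mem_Icc_iterate_two (fun hS ↦ hchaos (hS.evenChaos hf)) hz hez hu.1 hu.2⟩
  have he : e ≤ f^[2] e := hez.trans_eq ((congrArg f hfe).trans hz).symm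
  obtain ⟨p, ζ, q, hpζ, hζq, hqe, hpq, hζ, hmaps⟩ := IsOrbit.exists_mapsTo_Icc
    (y := fun n ↦ x (n + N)) (fun n ↦ by rw [← hx, add_right_comm]) (hf.iterate 2) hJ
    (fun hV ↦ hchaos (evenChaos_of_hasValley hf hJ hJz hzJ hV))
    (fun hP ↦ hchaos (evenChaos_of_hasPeak hf hz hJ hJz hzJ hP)) heJ he hJe
    (fun n ↦ ⟨(hxe _).le, hN _ (Nat.le_add_left N n)⟩) (fun n ↦ hxe _)
    (hb.mono (range_comp_subset_range (· + N) x))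
    (fun ⟨l, hl⟩ ↦ hconv ⟨l, (tendsto_add_atTop_iff_nat N).1 hl⟩)
  exact ⟨p, ζ, q, hpζ, hζq, hqe.trans_le hez, fun w hw ↦ hzJ w (hpq hw), hζ, hmaps⟩

theorem IsOrbit.evenChaos_or_exists_mapsTo_Icc (hy : IsOrbit f y) (hf : Continuous f)
    (ha : BddAbove (range y)) (hb : BddBelow (range y))
    (hconv : ¬∃ l, Tendsto (fun n ↦ y (2 * n)) atTop (𝓝 l)) :
    EvenChaos f ∨ ∃ p ζ q z, p < ζ ∧ ζ < q ∧ q < z ∧ (∀ w ∈ Icc p q, z ≤ f w) ∧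
      IsFixedPt f^[2] ζ ∧ MapsTo f^[2] (Icc p q) (Icc p q) := by
  refine or_iff_not_imp_left.2 fun hchaos ↦ ?_
  have hS : ¬HasSpiral f := fun hS ↦ hchaos (hS.evenChaos hf)
  have hS' : ¬HasSpiral (α := αᵒᵈ) f := fun hS' ↦ hchaos (hS'.evenChaos hf).dual
  obtain ⟨z, ho⟩ := hy.exists_oscillatesAbout hf ordConnected_univ (fun _ ↦ mem_univ _)
    (fun hV ↦ hS' (HasPeak.hasSpiral (α := αᵒᵈ) hV hf)) (fun hP ↦ hS (hP.hasSpiral hf)) ha hb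
    fun ⟨l, hl⟩ ↦ hconv ⟨l, hl.comp (tendsto_id.const_mul_atTop' two_pos)⟩
  obtain ⟨N, hN⟩ := ho.exists_alternating_tail hf hS hS'
  obtain ⟨p, ζ, q, hpζ, hζq, hqz, hzf, hζ, hmaps⟩ := exists_mapsTo_Icc_of_not_evenChaos hf ho.fixed
    hchaos (x := fun n ↦ y (N + 2 * n)) (fun n ↦ (hy _).trans (congrArg f (hy _)))
    (fun n ↦ (hN n).1) (fun n ↦ (hN n).2.trans_eq (hy _))
    (fun w n m hw hwn hnm ↦ ho.lt_of_not_hasSpiral hS hw hwn (hN n).1 (by lia))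
    (hb.mono (range_comp_subset_range _ y)) (hy.not_tendsto_even_tail hf hconv N)
  exact ⟨p, ζ, q, z, hpζ, hζq, hqz, hzf, hζ, hmaps⟩

end Dichotomy

/-! ### Maps of a compact interval -/

theorem Turbulent.nonempty_inter_range {α : Type*} [TopologicalSpace α] {g : α → α} {K : Set α}
    (ht : Turbulent g K) : (K ∩ range g).Nonempty :=
  let ⟨_, hJ₀, _, _, h⟩ := ht
  let ⟨x, hx⟩ := h.nontrivial_left.nonempty
  ⟨x, hJ₀ hx, image_subset_range g _ (h.subset_image_left (.inl hx))⟩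

theorem Turbulent.turbulentOn {g h : ℝ → ℝ} {K I L : Set ℝ} (ht : Turbulent g K)
    (hgI : range g ⊆ I) (hgh : EqOn g h I) (hKL : K ∩ I ⊆ L) : TurbulentOn h L := by
  obtain ⟨J₀, hJ₀, J₁, hJ₁, hJ⟩ := ht
  have hI : J₀ ∪ J₁ ⊆ I := (hJ.subset_image_left.trans (image_subset_range g J₀)).trans hgI
  have hI₀ : J₀ ⊆ I := subset_union_left.trans hI
  have hI₁ : J₁ ⊆ I := subset_union_right.trans hI
  obtain ⟨p₀, q₀, hpq₀, heq₀⟩ :=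
    exists_eq_Icc_of_nontrivial hJ.isCompact_left hJ.isPreconnected_left hJ.nontrivial_left
  obtain ⟨p₁, q₁, hpq₁, heq₁⟩ :=
    exists_eq_Icc_of_nontrivial hJ.isCompact_right hJ.isPreconnected_right hJ.nontrivial_right
  refine ⟨J₀, J₁, ⟨(subset_inter hJ₀ hI₀).trans hKL, p₀, q₀, hpq₀.le, heq₀⟩,
    ⟨(subset_inter hJ₁ hI₁).trans hKL, p₁, q₁, hpq₁.le, heq₁⟩, hJ.subsingleton_inter, ?_⟩
  rw [← (hgh.mono hI₀).image_eq, ← (hgh.mono hI₁).image_eq]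
  exact subset_inter hJ.subset_image_left hJ.subset_image_right

theorem eqOn_iterate_of_mapsTo {α : Type*} {f g : α → α} {s : Set α} (h : EqOn f g s)
    (hg : MapsTo g s s) (n : ℕ) : EqOn f^[n] g^[n] s := fun x hx ↦ by
  induction n with
  | zero => rfl
  | succ n ih => rw [iterate_succ_apply', iterate_succ_apply', ih, h (hg.iterate n hx)]

theorem exists_continuous_eqOn_Icc {α β : Type*} [LinearOrder α] [TopologicalSpace α]
    [OrderTopology α] [TopologicalSpace β] {f : α → β} {a b : α} (hab : a ≤ b)
    (hf : ContinuousOn f (Icc a b)) :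
    ∃ F : α → β, Continuous F ∧ EqOn F f (Icc a b) ∧ range F = f '' Icc a b :=
  ⟨IccExtend hab ((Icc a b).domRestrict f), hf.domRestrict.Icc_extend',
    fun _ hx ↦ IccExtend_of_mem hab _ hx, (IccExtend_range hab _).trans (range_domRestrict f _)⟩

section EvenChaos

variable {f F : ℝ → ℝ} {a b : ℝ}

theorem EvenChaos.exists_periodicPtOfPeriod (h : EvenChaos F) (hF : range F ⊆ Icc a b)
    (hFf : ∀ n, EqOn F^[n] f^[n] (Icc a b)) {m : ℕ} (hm : 1 ≤ m) :
    ∃ y ∈ Icc a b, PeriodicPtOfPeriod f (2 * m) y := by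
  obtain ⟨w, hw⟩ := h.1 m hm
  have hper : F^[2 * m] w = w := hw ▸ isPeriodicPt_minimalPeriod F w
  have hwI : w ∈ Icc a b := hF <| by
    obtain ⟨k, hk⟩ := Nat.exists_eq_succ_of_ne_zero (by lia : 2 * m ≠ 0)
    exact ⟨F^[k] w, by rwa [hk, iterate_succ_apply'] at hper⟩
  refine ⟨w, hwI, (hFf _ hwI).symm.trans hper, fun j hj hjm hfj ↦ ?_⟩
  exact not_isPeriodicPt_of_pos_of_lt_minimalPeriod hj.ne' (hw ▸ hjm) ((hFf j hwI).trans hfj)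

theorem EvenChaos.doublyTurbulentOn (h : EvenChaos F) (hF : range F ⊆ Icc a b)
    (hFf : EqOn F^[2] f^[2] (Icc a b)) : DoublyTurbulentOn f^[2] (Icc a b) := by
  obtain ⟨-, z, hleft, hright⟩ := h
  have hF₂ : range F^[2] ⊆ Icc a b := (range_comp_subset_range F F).trans hF
  obtain ⟨x, hxz, hx⟩ := hleft.nonempty_inter_range
  obtain ⟨y, hzy, hy⟩ := hright.nonempty_inter_range
  have haz : a ≤ z := (hF₂ hx).1.trans hxz
  have hzb : z ≤ b := le_trans hzy (hF₂ hy).2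
  refine ⟨Icc a z, Icc z b, ⟨Icc_subset_Icc_right hzb, a, z, haz, rfl⟩,
    ⟨Icc_subset_Icc_left haz, z, b, hzb, rfl⟩, ?_,
    hleft.turbulentOn hF₂ hFf fun w hw ↦ ⟨hw.2.1, hw.1⟩,
    hright.turbulentOn hF₂ hFf fun w hw ↦ ⟨hw.1, hw.2.2⟩⟩
  rw [Icc_inter_Icc_eq_singleton haz hzb]
  exact subsingleton_singleton

end EvenChaos

theorem isFixedPt_and_tendsto_dist_iterate {X : Type*} [MetricSpace X] {F : X → X}
    (hF : Continuous F) {x l : X} (hl : Tendsto (fun n ↦ F^[2 * n] x) atTop (𝓝 l)) :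
    IsFixedPt F^[2] l ∧ Tendsto (fun n ↦ dist (F^[n] x) (F^[n] l)) atTop (𝓝 0) := by
  have hfix : IsFixedPt F^[2] l := isFixedPt_of_tendsto_iterate
    (hl.congr fun n ↦ congrFun (iterate_mul F 2 n) x) (hF.iterate 2).continuousAt
  have heven : ∀ n, F^[2 * n] l = l := fun n ↦ iterate_mul F 2 n ▸ hfix.iterate n
  have hl' : Tendsto (fun n ↦ F^[2 * n + 1] x) atTop (𝓝 (F l)) :=
    IsOrbit.tendsto_succ (y := fun n ↦ F^[n] x) (fun n ↦ iterate_succ_apply' F n x) hF hl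
  refine ⟨hfix, Metric.tendsto_atTop.2 fun ε hε ↦ ?_⟩
  obtain ⟨N, hN⟩ := Metric.tendsto_atTop.1 hl ε hε
  obtain ⟨N', hN'⟩ := Metric.tendsto_atTop.1 hl' ε hε
  refine ⟨2 * max N N', fun n hn ↦ ?_⟩
  rw [Real.dist_0_eq_abs, abs_dist]
  rcases Nat.even_or_odd' n with ⟨k, rfl | rfl⟩
  · rw [heven]
    exact hN k (by lia)
  · rw [iterate_succ_apply' F (2 * k) l, heven]
    exact hN' k (by lia)

section Separation

variable {F : ℝ → ℝ} {p q z : ℝ}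

theorem sub_le_abs_iterate_sub (hmaps : MapsTo F^[2] (Icc p q) (Icc p q))
    (hz : ∀ w ∈ Icc p q, z ≤ F w) {u v : ℝ} (hu : u ∈ Icc p q) (hv : F v ∈ Icc p q) {n : ℕ}
    (hn : 1 ≤ n) : z - q ≤ |F^[n] u - F^[n] v| := by
  have heven : ∀ w ∈ Icc p q, ∀ k, F^[2 * k] w ∈ Icc p q := fun w hw k ↦
    iterate_mul F 2 k ▸ hmaps.iterate k hw
  have hodd : ∀ w ∈ Icc p q, ∀ k, z ≤ F^[2 * k + 1] w := fun w hw k ↦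
    iterate_succ_apply' F (2 * k) w ▸ hz _ (heven w hw k)
  obtain ⟨m, rfl⟩ := Nat.exists_eq_add_of_le' hn
  rw [iterate_succ_apply F m v]
  rcases Nat.even_or_odd' m with ⟨k, rfl | rfl⟩
  · exact (sub_le_sub (hodd u hu k) (heven _ hv k).2).trans (le_abs_self _)
  · rw [abs_sub_comm]
    exact (sub_le_sub (hodd _ hv k) (heven u hu (k + 1)).2).trans (le_abs_self _)

theorem le_liminf_abs_iterate_sub (hF : Bornology.IsBounded (range F)) {u v c : ℝ}
    (hc : ∀ n, 1 ≤ n → c ≤ |F^[n] u - F^[n] v|) :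
    c ≤ liminf (fun n ↦ |F^[n] u - F^[n] v|) atTop := by
  obtain ⟨C, hC⟩ := Metric.isBounded_iff.1 hF
  have hbdd : IsBoundedUnder (· ≤ ·) atTop fun n ↦ |F^[n] u - F^[n] v| :=
    isBoundedUnder_of_eventually_le <| (eventually_ge_atTop 1).mono fun n hn ↦ by
      obtain ⟨m, rfl⟩ := Nat.exists_eq_add_of_le' hn
      rw [iterate_succ_apply', iterate_succ_apply', ← Real.dist_eq]
      exact hC (mem_range_self _) (mem_range_self _)
  exact le_liminf_of_le hbdd.isCoboundedUnder_ge ((eventually_ge_atTop 1).mono hc)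

theorem notMem_closure_of_mapsTo_Icc (hF : Continuous F) (hbdd : Bornology.IsBounded (range F))
    {ζ : ℝ} (hζ : ζ ∈ Ioo p q) (hfix : IsFixedPt F^[2] ζ) (hqz : q < z)
    (hz : ∀ w ∈ Icc p q, z ≤ F w) (hmaps : MapsTo F^[2] (Icc p q) (Icc p q)) :
    (ζ, F ζ) ∉ closure {x : ℝ × ℝ | liminf (fun n ↦ |F^[n] x.1 - F^[n] x.2|) atTop = 0} := by
  have hopen : IsOpen {x : ℝ × ℝ | x.1 ∈ Ioo p q ∧ F x.2 ∈ Ioo p q} :=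
    (isOpen_Ioo.preimage continuous_fst).inter (isOpen_Ioo.preimage (hF.comp continuous_snd))
  intro hmem
  obtain ⟨x, ⟨hx₁, hx₂⟩, hlim⟩ :=
    mem_closure_iff.1 hmem _ hopen ⟨hζ, mem_of_eq_of_mem hfix hζ⟩
  refine (sub_pos.2 hqz).not_ge ((le_liminf_abs_iterate_sub hbdd fun n hn ↦ ?_).trans_eq hlim)
  exact sub_le_abs_iterate_sub hmaps hz (Ioo_subset_Icc_self hx₁) (Ioo_subset_Icc_self hx₂) hn

theorem evenChaos_of_mem_closure (hF : Continuous F) (hbdd : Bornology.IsBounded (range F)) {x : ℝ}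
    (hconv : ¬∃ l, Tendsto (fun n ↦ F^[2 * n] x) atTop (𝓝 l))
    (hprox : ∀ ζ, IsFixedPt F^[2] ζ → (ζ, F ζ) ∈
      closure {y : ℝ × ℝ | liminf (fun n ↦ |F^[n] y.1 - F^[n] y.2|) atTop = 0}) :
    EvenChaos F := by
  have horbit : Bornology.IsBounded (range fun n ↦ F^[n] x) :=
    (hbdd.insert x).subset <| range_subset_iff.2 fun
      | 0 => .inl rfl
      | n + 1 => .inr ⟨F^[n] x, (iterate_succ_apply' F n x).symm⟩
  refine (IsOrbit.evenChaos_or_exists_mapsTo_Icc (y := fun n ↦ F^[n] x)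
    (fun n ↦ iterate_succ_apply' F n x) hF horbit.bddAbove horbit.bddBelow hconv).resolve_right ?_
  rintro ⟨p, ζ, q, z, hpζ, hζq, hqz, hz, hfix, hmaps⟩
  exact notMem_closure_of_mapsTo_Icc hF hbdd ⟨hpζ, hζq⟩ hfix hqz hz hmaps (hprox ζ hfix)

end Separation

theorem stmt_8 (a b : ℝ) (hab : a ≤ b) (f : ℝ → ℝ)
    (hf : ContinuousOn f (Set.Icc a b)) (hmaps : Set.MapsTo f (Set.Icc a b) (Set.Icc a b))
    (hnotap : ∃ x ∈ Set.Icc a b, ¬∃ y ∈ Set.Icc a b, f^[2] y = y ∧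
      Filter.Tendsto (fun n => |f^[n] x - f^[n] y|) Filter.atTop (nhds 0))
    (hdense : Set.Icc a b ×ˢ Set.Icc a b ⊆ closure {p : ℝ × ℝ |
      p.1 ∈ Set.Icc a b ∧ p.2 ∈ Set.Icc a b ∧
      Filter.liminf (fun n => |f^[n] p.1 - f^[n] p.2|) Filter.atTop = 0}) :
    (∀ m : ℕ, 1 ≤ m → ∃ y ∈ Set.Icc a b, PeriodicPtOfPeriod f (2 * m) y) ∧
      DoublyTurbulentOn (f^[2]) (Set.Icc a b) := by
  obtain ⟨F, hF, hFf, hFrange⟩ := exists_continuous_eqOn_Icc hab hf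
  have hFI : range F ⊆ Icc a b := hFrange.trans_subset hmaps.image_subset
  have hiter : ∀ n, EqOn F^[n] f^[n] (Icc a b) := eqOn_iterate_of_mapsTo hFf hmaps
  have hchaos : EvenChaos F := by
    obtain ⟨x, hx, hnot⟩ := hnotap
    refine evenChaos_of_mem_closure hF ((Metric.isBounded_Icc a b).subset hFI) (x := x) ?_ ?_
    · rintro ⟨l, hl⟩
      obtain ⟨hfix, hdist⟩ := isFixedPt_and_tendsto_dist_iterate hF hl
      have hlI : l ∈ Icc a b := hFI ⟨F l, hfix⟩
      exact hnot ⟨l, hlI, (hiter 2 hlI).symm.trans hfix,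
        hdist.congr fun n ↦ by rw [Real.dist_eq, hiter n hx, hiter n hlI]⟩
    · refine fun ζ hfix ↦ closure_mono (fun y hy ↦ ?_) (hdense ⟨hFI ⟨F ζ, hfix⟩, hFI ⟨ζ, rfl⟩⟩)
      simpa only [mem_ofPred_eq, hiter _ hy.1, hiter _ hy.2.1] using hy.2.2
  exact ⟨fun m hm ↦ hchaos.exists_periodicPtOfPeriod hFI hiter hm,
    hchaos.doublyTurbulentOn hFI (hiter 2)⟩
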